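/- There is a constant C = C(d) > 0 with the following property: for every u₀ ∈ L²(ℝ^d) with ∫_{ℝ^d} (1+|x|)² |u₀(x)|² dx < ∞, and for every T > 0, N > 0 and r ≥ 1, there exists R ∈ L²(ℝ^d) with ‖R‖ ≤ C (1 + (TN²)^{-d/4}) ( e^{-TN²} + (1 + T^{d/2})(1 + T^{-1/2}) r^{-1} ) (∫_{ℝ^d} (1+|x|)² |u₀(x)|² dx)^{1/2} such that u(T,·) = Σ_{n∈ℤ^d, |n/N| < r} u(T, n/N) f_{N,n} + R in L²(ℝ^d), where u is the heat solution with initial datum u₀ and the sum ranges over the finitely many n ∈ ℤ^d with |n/N| < r. -/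

import Mathlib

open MeasureTheory Filter Topology Metric ENNReal NNReal

noncomputable section

/-- `sinc` with value 1 at 0. -/
def sinc' (x : ℝ) : ℝ := if x = 0 then 1 else Real.sin x / x

/-- The function `f_{N,n}(x) = ∏_j sin (π (N x_j - n_j)) / (π (N x_j - n_j))`. -/
def fN (d : ℕ) (N : ℝ) (n : Fin d → ℤ) (x : EuclideanSpace ℝ (Fin d)) : ℝ :=
  ∏ j, sinc' (Real.pi * (N * x j - n j))

/-- The lattice point `n / N` in `ℝ^d`. -/
def latticePt (d : ℕ) (N : ℝ) (n : Fin d → ℤ) : EuclideanSpace ℝ (Fin d) :=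
  WithLp.toLp 2 fun j => (n j : ℝ) / N

/-- The heat solution at time `t > 0` with initial datum `u₀ ∈ L²(ℝ^d)`:
`u(t,x) = (4πt)^{-d/2} ∫ e^{-|x-y|²/(4t)} u₀(y) dy`. -/
def heatSol (d : ℕ) (u₀ : EuclideanSpace ℝ (Fin d) → ℝ) (t : ℝ)
    (x : EuclideanSpace ℝ (Fin d)) : ℝ :=
  (4 * Real.pi * t) ^ (-(d : ℝ) / 2) * ∫ y, Real.exp (-‖x - y‖ ^ 2 / (4 * t)) * u₀ y

/-- The family `F` is summable in `L²(ℝ^d)` with sum `g`: the finite partial sums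
converge to `g` in the `L²` norm along the filter of finite subsets of `ℤ^d`. -/
def HasSumL2 (d : ℕ) {V : Type} [NormedAddCommGroup V]
    (F : (Fin d → ℤ) → EuclideanSpace ℝ (Fin d) → V)
    (g : EuclideanSpace ℝ (Fin d) → V) : Prop :=
  Tendsto (fun s : Finset (Fin d → ℤ) =>
    eLpNorm (fun x => g x - ∑ n ∈ s, F n x) 2 volume) atTop (𝓝 0)

/-- The closed cube `Q_r(0)` in `ℝ^d`, centered at the origin, of side length `2r`. -/
def Qcube (d : ℕ) (r : ℝ) : Set (EuclideanSpace ℝ (Fin d)) := {ξ | ∀ j, |ξ j| ≤ r}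

/-- The truncated Fourier integral, with the paper's normalization
`(2π)^{-d/2} ∫_{|x| ≤ R} e^{-i x·ξ} f(x) dx`. -/
def truncFT (d : ℕ) (f : EuclideanSpace ℝ (Fin d) → ℂ) (R : ℝ)
    (ξ : EuclideanSpace ℝ (Fin d)) : ℂ :=
  (((2 * Real.pi) ^ (-(d : ℝ) / 2) : ℝ) : ℂ) *
    ∫ x in closedBall (0 : EuclideanSpace ℝ (Fin d)) R,
      Complex.exp (-(Complex.I * ((inner ℝ x ξ : ℝ) : ℂ))) * f x

/-- `fhat` is the Fourier transform of `f ∈ L²(ℝ^d)` in the `L²` (Plancherel) sense: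
`fhat ∈ L²` and the Fourier integrals of the truncations of `f` converge to `fhat`
in the `L²` norm. -/
def IsL2Fourier (d : ℕ) (f fhat : EuclideanSpace ℝ (Fin d) → ℂ) : Prop :=
  MemLp fhat 2 volume ∧
    Tendsto (fun R : ℝ => eLpNorm (fun ξ => fhat ξ - truncFT d f R ξ) 2 volume)
      atTop (𝓝 0)

/-- The `L²(ℝ^d)` norm of a function, as a real number. -/
def l2norm (d : ℕ) {V : Type} [NormedAddCommGroup V]
    (f : EuclideanSpace ℝ (Fin d) → V) : ℝ :=
  (eLpNorm f 2 volume).toReal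

/-!
By scaling it suffices to sample at the integer points. The heat solution is the Fourier transform
of `b = e^{-4π²τ|ξ|²} v` with `v ∈ L²`, so its samples are the Fourier coefficients, on the unit
cube `Q`, of the periodization of `b`, while the functions `f_{1,n}` are the Fourier transforms of
the characters of `ℤ^d` cut off to `Q`. Plancherel on `ℝ^d` and Parseval on `Q` thus split the
squared error into the mass of `b` outside `Q`, the aliasing error `∑_{k ≠ 0} b(· + k)` on `Q`, and
the energy of the samples that are dropped. Off `Q` the Gaussian is exponentially small, which
handles the first two; the weight on `u₀` together with the decay of the heat kernel controls the
third.
-/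

open scoped FourierTransform RealInnerProductSpace

section FourierL2

variable {V F : Type*} [NormedAddCommGroup V] [InnerProductSpace ℝ V] [FiniteDimensional ℝ V]
  [MeasurableSpace V] [BorelSpace V] [NormedAddCommGroup F] [InnerProductSpace ℂ F] {f : V → F}

theorem continuous_fourier_of_integrable (hf : Integrable f) : Continuous (𝓕 f) :=
  VectorFourier.fourierIntegral_continuous Real.continuous_fourierChar
    (by exact continuous_inner) hf

variable [CompleteSpace F]

/- Both sides are locally integrable and agree against every test function, because the
`L²` Fourier transform is the restriction of the one on tempered distributions. -/
theorem coeFn_fourier_toLp (hf : Integrable f) (hf₂ : MemLp f 2) :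
    ((𝓕 (hf₂.toLp f) : Lp F 2 (volume : Measure V)) : V → F) =ᵐ[volume] 𝓕 f := by
  have hloc : LocallyIntegrable (𝓕 (hf₂.toLp f) : Lp F 2 (volume : Measure V)) volume :=
    (Lp.memLp _).locallyIntegrable (by norm_num)
  refine ae_eq_of_integral_contDiff_smul_eq hloc
    (continuous_fourier_of_integrable hf).locallyIntegrable fun φ hφ hc ↦ ?_
  have hφc : HasCompactSupport (Complex.ofRealCLM ∘ φ) := hc.comp_left rfl
  let ψ : SchwartzMap V ℂ := hφc.toSchwartzMap (by fun_prop)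
  have hψ : ∀ x, ψ x = (φ x : ℂ) := fun x ↦ rfl
  have hdual : ∫ x, (𝓕 ψ) x • (hf₂.toLp f) x
      = ∫ x, ψ x • (𝓕 (hf₂.toLp f) : Lp F 2 (volume : Measure V)) x := by
    simpa only [TemperedDistribution.fourier_apply, Lp.toTemperedDistribution_apply] using
      congrArg (fun T ↦ T ψ) (Lp.fourier_toTemperedDistribution_eq (hf₂.toLp f))
  have htoLp : ∫ x, (𝓕 ψ) x • (hf₂.toLp f) x = ∫ x, 𝓕 (ψ : V → ℂ) x • f x := by
    refine integral_congr_ae ?_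
    filter_upwards [hf₂.coeFn_toLp] with x hx
    rw [hx]; rfl
  have hflip : ∫ x, 𝓕 (ψ : V → ℂ) x • f x = ∫ x, ψ x • 𝓕 f x := by
    have := VectorFourier.integral_fourierIntegral_smul_eq_flip (μ := volume) (ν := volume)
      (L := innerₗ V) (f := (ψ : V → ℂ)) (g := f)
      Real.continuous_fourierChar (by exact continuous_inner) ψ.integrable hf
    rwa [flip_innerₗ] at this
  simpa [hψ] using hdual.symm.trans (htoLp.trans hflip)

theorem memLp_two_fourier (hf : Integrable f) (hf₂ : MemLp f 2) : MemLp (𝓕 f) 2 :=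
  (memLp_congr_ae (coeFn_fourier_toLp hf hf₂)).1 (Lp.memLp _)

theorem eLpNorm_fourier_two (hf : Integrable f) (hf₂ : MemLp f 2) :
    eLpNorm (𝓕 f) 2 = eLpNorm f 2 := by
  rw [← eLpNorm_congr_ae (coeFn_fourier_toLp hf hf₂), ← eLpNorm_congr_ae hf₂.coeFn_toLp,
    ← Lp.enorm_def, ← Lp.enorm_def, ← ofReal_norm, ← ofReal_norm, Lp.norm_fourier_eq]

theorem integral_inner_fourierInv (hf : Integrable f) (hf₂ : MemLp f 2)
    (U : Lp F 2 (volume : Measure V)) :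
    ∫ ξ, inner ℂ (f ξ) ((𝓕⁻ U : Lp F 2 (volume : Measure V)) ξ) = ∫ x, inner ℂ (𝓕 f x) (U x) := by
  have h := Lp.inner_fourier_eq (hf₂.toLp f) (𝓕⁻ U)
  rw [FourierTransform.fourier_fourierInv_eq, L2.inner_def, L2.inner_def] at h
  calc _ = ∫ ξ, inner ℂ (hf₂.toLp f ξ) ((𝓕⁻ U : Lp F 2 (volume : Measure V)) ξ) := by
        refine integral_congr_ae ?_
        filter_upwards [hf₂.coeFn_toLp] with ξ hξ
        rw [hξ]
    _ = ∫ x, inner ℂ ((𝓕 (hf₂.toLp f) : Lp F 2 (volume : Measure V)) x) (U x) := h.symm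
    _ = _ := by
        refine integral_congr_ae ?_
        filter_upwards [coeFn_fourier_toLp hf hf₂] with x hx
        rw [hx]

end FourierL2

theorem eLpNorm_two_sq {α E : Type*} [MeasurableSpace α] [NormedAddCommGroup E] (f : α → E)
    (μ : Measure α) : eLpNorm f 2 μ ^ 2 = ∫⁻ x, ‖f x‖ₑ ^ 2 ∂μ := by
  simpa using eLpNorm_nnreal_pow_eq_lintegral (f := f) (μ := μ) (p := 2) (by norm_num)

/-- The Fourier multiplier `e^{-4π²τ|ξ|²}` of the heat semigroup at time `τ`. -/
def heatSymbol {V : Type*} [NormedAddCommGroup V] (τ : ℝ) (ξ : V) : ℝ :=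
  Real.exp (-(4 * Real.pi ^ 2 * τ * ‖ξ‖ ^ 2))

theorem continuous_heatSymbol {V : Type*} [NormedAddCommGroup V] (τ : ℝ) :
    Continuous (heatSymbol τ : V → ℝ) := by
  unfold heatSymbol; fun_prop

theorem heatSymbol_pos {V : Type*} [NormedAddCommGroup V] (τ : ℝ) (ξ : V) :
    0 < heatSymbol τ ξ :=
  Real.exp_pos _

theorem heatSymbol_le_one {V : Type*} [NormedAddCommGroup V] {τ : ℝ} (hτ : 0 ≤ τ) (ξ : V) :
    heatSymbol τ ξ ≤ 1 :=
  Real.exp_le_one_iff.2 (neg_nonpos.2 (by positivity))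

section Gaussian

variable {V : Type*} [NormedAddCommGroup V] [InnerProductSpace ℝ V] [FiniteDimensional ℝ V]
  [MeasurableSpace V] [BorelSpace V]

/-- The Gauss–Weierstrass kernel at time `τ`, whose Fourier transform is `heatSymbol τ`. -/
def heatKernel (τ : ℝ) (x : V) : ℝ :=
  (4 * Real.pi * τ) ^ (-(Module.finrank ℝ V : ℝ) / 2) * Real.exp (-‖x‖ ^ 2 / (4 * τ))

theorem integrable_exp_neg_mul_sq_norm {b : ℝ} (hb : 0 < b) :
    Integrable fun v : V ↦ Real.exp (-(b * ‖v‖ ^ 2)) := by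
  refine (GaussianFourier.integrable_cexp_neg_mul_sq_norm_add (V := V) (b := (b : ℂ))
    (by simpa using hb) 0 0).norm.congr (.of_forall fun v ↦ ?_)
  simp [Complex.norm_exp, ← Complex.ofReal_pow]

theorem integrable_heatSymbol {τ : ℝ} (hτ : 0 < τ) : Integrable (heatSymbol τ : V → ℝ) :=
  integrable_exp_neg_mul_sq_norm (by positivity)

theorem memLp_two_heatSymbol {τ : ℝ} (hτ : 0 < τ) : MemLp (heatSymbol τ : V → ℝ) 2 := by
  rw [memLp_two_iff_integrable_sq (continuous_heatSymbol τ).aestronglyMeasurable]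
  refine (integrable_exp_neg_mul_sq_norm (V := V) (b := 2 * (4 * Real.pi ^ 2 * τ))
    (by positivity)).congr (.of_forall fun ξ ↦ ?_)
  simp only [heatSymbol, ← Real.exp_nat_mul]
  congr 1; push_cast; ring

theorem fourier_heatSymbol_mul_exp_inner {τ : ℝ} (hτ : 0 < τ) (x y : V) :
    𝓕 (fun ξ : V ↦ (heatSymbol τ ξ : ℂ) * Complex.exp (2 * Real.pi * Complex.I * ⟪x, ξ⟫)) y =
      heatKernel τ (x - y) := by
  set b : ℝ := 4 * Real.pi ^ 2 * τ with hb
  have hb_pos : 0 < b := by positivity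
  have hπ : (Real.pi : ℂ) ≠ 0 := by simp [Real.pi_ne_zero]
  have hτ_ne : (τ : ℂ) ≠ 0 := by simp [hτ.ne']
  have hmod : (fun ξ : V ↦ (heatSymbol τ ξ : ℂ) * Complex.exp (2 * Real.pi * Complex.I * ⟪x, ξ⟫)) =
      fun ξ ↦ Complex.exp (-(b : ℂ) * ‖ξ‖ ^ 2 + 2 * Real.pi * Complex.I * ⟪x, ξ⟫) := by
    funext ξ
    rw [heatSymbol, Complex.ofReal_exp, ← Complex.exp_add]
    simp [hb]
  have hbase : (Real.pi / b : ℂ) = (((4 * Real.pi * τ)⁻¹ : ℝ) : ℂ) := by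
    rw [hb]; push_cast; field_simp
  have hexp : -(Real.pi : ℂ) ^ 2 * (‖x - y‖ : ℂ) ^ 2 / (b : ℂ)
      = ((-‖x - y‖ ^ 2 / (4 * τ) : ℝ) : ℂ) := by
    rw [hb]; push_cast; field_simp
  rw [hmod, fourier_gaussian_innerProductSpace' (by simpa using hb_pos), heatKernel, hbase, hexp,
    neg_div (2 : ℝ), Real.rpow_neg (by positivity), ← Real.inv_rpow (by positivity),
    Complex.ofReal_mul, Complex.ofReal_cpow (by positivity), Complex.ofReal_exp]
  push_cast; rfl

/-- The solution at time `τ` of the heat equation with initial datum `u`. -/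
def heatFlow (τ : ℝ) (u : V → ℂ) (x : V) : ℂ := ∫ y, (heatKernel τ (x - y) : ℂ) * u y

variable {v : V → ℂ} {τ : ℝ}

theorem integrable_heatSymbol_mul (hτ : 0 < τ) (hv : MemLp v 2) :
    Integrable fun ξ ↦ (heatSymbol τ ξ : ℂ) * v ξ :=
  (memLp_two_heatSymbol hτ).ofReal.integrable_mul hv

theorem memLp_two_heatSymbol_mul (hτ : 0 ≤ τ) (hv : MemLp v 2) :
    MemLp (fun ξ ↦ (heatSymbol τ ξ : ℂ) * v ξ) 2 := by
  refine hv.of_le ((Complex.continuous_ofReal.comp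
    (continuous_heatSymbol τ)).aestronglyMeasurable.mul hv.1) (.of_forall fun ξ ↦ ?_)
  rw [norm_mul, Complex.norm_of_nonneg (heatSymbol_pos τ ξ).le]
  exact mul_le_of_le_one_left (norm_nonneg _) (heatSymbol_le_one hτ ξ)

theorem exists_fourier_heatSymbol_mul_eq_heatFlow {u : V → ℂ} (hu : MemLp u 2) :
    ∃ v : V → ℂ, MemLp v 2 ∧ eLpNorm v 2 = eLpNorm u 2 ∧ ∀ τ, 0 < τ → ∀ x,
      𝓕 (fun ξ ↦ (heatSymbol τ ξ : ℂ) * v ξ) x = heatFlow τ u x := by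
  let U := hu.toLp u
  refine ⟨(𝓕⁻ U : Lp ℂ 2 (volume : Measure V)), Lp.memLp _, ?_, fun τ hτ x ↦ ?_⟩
  · rw [← eLpNorm_congr_ae hu.coeFn_toLp, ← Lp.enorm_def, ← Lp.enorm_def, ← ofReal_norm,
      ← ofReal_norm, ← Lp.norm_fourier_eq, FourierTransform.fourier_fourierInv_eq]
  have hwave : MemLp (fun ξ : V ↦ Complex.exp (2 * Real.pi * Complex.I * ⟪x, ξ⟫)) ∞ :=
    memLp_top_of_bound (by fun_prop) 1 (.of_forall fun ξ ↦ by simp [Complex.norm_exp])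
  have hinner := integral_inner_fourierInv
    ((integrable_heatSymbol hτ).ofReal.mul_of_top_left hwave)
    (hwave.mul (memLp_two_heatSymbol hτ).ofReal) U
  calc _ = ∫ ξ, inner ℂ ((heatSymbol τ ξ : ℂ) * Complex.exp (2 * Real.pi * Complex.I * ⟪x, ξ⟫))
        ((𝓕⁻ U : Lp ℂ 2 (volume : Measure V)) ξ) := by
        rw [Real.fourier_eq']
        refine integral_congr_ae (.of_forall fun ξ ↦ ?_)
        simp only [RCLike.inner_apply, smul_eq_mul, map_mul, Complex.conj_ofReal,
          ← Complex.exp_conj, Complex.conj_I, map_ofNat, real_inner_comm x ξ]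
        push_cast
        ring_nf
    _ = ∫ y, inner ℂ (heatKernel τ (x - y) : ℂ) (U y) := by
        simp_rw [← fourier_heatSymbol_mul_exp_inner hτ x]
        exact hinner
    _ = ∫ y, (heatKernel τ (x - y) : ℂ) * u y := by
        refine integral_congr_ae ?_
        filter_upwards [hu.coeFn_toLp] with y hy
        rw [hy, RCLike.inner_apply, Complex.conj_ofReal, mul_comm]

end Gaussian

section IntegerLattice

variable {ι : Type*}

/-- The embedding of the integer lattice `ℤ^ι` into Euclidean space. -/
def intVec : (ι → ℤ) →+ EuclideanSpace ℝ ι where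
  toFun n := WithLp.toLp 2 fun j ↦ (n j : ℝ)
  map_zero' := by ext j; simp
  map_add' _ _ := by ext j; simp

@[simp]
theorem intVec_apply (n : ι → ℤ) (j : ι) : intVec n j = n j := rfl

theorem intVec_injective : Function.Injective (intVec : (ι → ℤ) → EuclideanSpace ℝ ι) :=
  fun _ _ h ↦ funext fun j ↦ Int.cast_injective (α := ℝ) (congrArg (fun x ↦ x j) h)

/-- The half-open cube `(-1/2, 1/2]^ι`, a fundamental domain of the integer lattice. -/
def unitCube (ι : Type*) : Set (EuclideanSpace ℝ ι) := {x | ∀ j, x j ∈ Set.Ioc (-(1 / 2)) (1 / 2)}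

theorem existsUnique_add_intVec_mem_unitCube (x : EuclideanSpace ℝ ι) :
    ∃! n, x + intVec n ∈ unitCube ι := by
  have hcoord (j : ι) : ∃! m : ℤ, x j + m ∈ Set.Ioc (-(1 / 2)) (1 / 2 : ℝ) := by
    have := existsUnique_add_zsmul_mem_Ioc one_pos (x j) (-(1 / 2))
    norm_num at this ⊢
    exact this
  choose n hn hn_unique using hcoord
  exact ⟨n, hn, fun m hm ↦ funext fun j ↦ hn_unique j _ (hm j)⟩

theorem add_intVec_notMem_unitCube {x : EuclideanSpace ℝ ι} (hx : x ∈ unitCube ι) {k : ι → ℤ}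
    (hk : k ≠ 0) : x + intVec k ∉ unitCube ι := fun h ↦
  hk ((existsUnique_add_intVec_mem_unitCube x).unique h (by simpa using hx))

theorem unitCube_eq_preimage_pi : unitCube ι =
    (MeasurableEquiv.toLp 2 (ι → ℝ)).symm ⁻¹' Set.univ.pi fun _ ↦ Set.Ioc (-(1 / 2)) (1 / 2) := by
  ext x; simp [unitCube]

theorem measurableSet_unitCube [Countable ι] : MeasurableSet (unitCube ι) := by
  rw [unitCube_eq_preimage_pi]
  exact (MeasurableEquiv.toLp 2 (ι → ℝ)).symm.measurable (.univ_pi fun _ ↦ measurableSet_Ioc)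

instance [Finite ι] : Countable (intVec (ι := ι)).range := (Set.countable_range _).to_subtype

variable [Fintype ι]

@[simp]
theorem volume_unitCube : volume (unitCube ι) = 1 := by
  rw [unitCube_eq_preimage_pi,
    (EuclideanSpace.volume_preserving_symm_measurableEquiv_toLp ι).measure_preimage
      (MeasurableSet.univ_pi fun _ ↦ measurableSet_Ioc).nullMeasurableSet, Real.volume_pi_Ioc]
  norm_num

instance : IsProbabilityMeasure (volume.restrict (unitCube ι)) := ⟨by simp⟩

theorem norm_sq_le_card_of_mem_unitCube {x : EuclideanSpace ℝ ι} (hx : x ∈ unitCube ι) :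
    ‖x‖ ^ 2 ≤ Fintype.card ι := by
  calc ‖x‖ ^ 2 = ∑ j, x j ^ 2 := by simp [EuclideanSpace.norm_sq_eq]
    _ ≤ ∑ _j : ι, (1 : ℝ) := Finset.sum_le_sum fun j _ ↦ by
      obtain ⟨hl, hr⟩ := hx j
      nlinarith
    _ = Fintype.card ι := by simp

theorem one_div_four_le_norm_sq_of_notMem_unitCube {x : EuclideanSpace ℝ ι}
    (hx : x ∉ unitCube ι) : 1 / 4 ≤ ‖x‖ ^ 2 := by
  obtain ⟨j, hj⟩ : ∃ j, x j ∉ Set.Ioc (-(1 / 2)) (1 / 2 : ℝ) := by simpa [unitCube] using hx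
  have hnorm : |x j| ≤ ‖x‖ := PiLp.norm_apply_le x j
  have habs : 1 / 2 ≤ |x j| := by
    by_contra! h
    exact hj ⟨(abs_lt.1 h).1, (abs_lt.1 h).2.le⟩
  nlinarith

theorem isAddFundamentalDomain_unitCube :
    IsAddFundamentalDomain (intVec (ι := ι)).range (unitCube ι) volume := by
  refine .mk' measurableSet_unitCube.nullMeasurableSet fun x ↦ ?_
  obtain ⟨n, hn, hn_unique⟩ := existsUnique_add_intVec_mem_unitCube x
  refine ⟨⟨intVec n, n, rfl⟩, by simpa [AddSubgroup.vadd_def, add_comm] using hn, ?_⟩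
  rintro ⟨_, m, rfl⟩ hm
  rw [hn_unique m (by simpa [AddSubgroup.vadd_def, add_comm] using hm)]

theorem lintegral_eq_tsum_unitCube (f : EuclideanSpace ℝ ι → ℝ≥0∞) :
    ∫⁻ x, f x = ∑' n, ∫⁻ x in unitCube ι, f (x + intVec n) := by
  rw [isAddFundamentalDomain_unitCube.lintegral_eq_tsum'',
    ← (AddMonoidHom.ofInjective intVec_injective).toEquiv.tsum_eq]
  simp [AddSubgroup.vadd_def, AddMonoidHom.ofInjective_apply, add_comm]

variable {E : Type*} [NormedAddCommGroup E]

theorem integral_eq_tsum_unitCube [NormedSpace ℝ E] {f : EuclideanSpace ℝ ι → E}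
    (hf : Integrable f) : ∫ x, f x = ∑' n, ∫ x in unitCube ι, f (x + intVec n) := by
  rw [isAddFundamentalDomain_unitCube.integral_eq_tsum'' f hf,
    ← (AddMonoidHom.ofInjective intVec_injective).toEquiv.tsum_eq]
  simp [AddSubgroup.vadd_def, AddMonoidHom.ofInjective_apply, add_comm]

theorem lintegral_unitCube_tsum_add_intVec {f : EuclideanSpace ℝ ι → ℝ≥0∞} (hf : AEMeasurable f) :
    ∫⁻ θ in unitCube ι, ∑' k, f (θ + intVec k) = ∫⁻ x, f x := by
  rw [lintegral_eq_tsum_unitCube, lintegral_tsum]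
  exact fun k ↦ (hf.comp_quasiMeasurePreserving
    (measurePreserving_add_right _ _).quasiMeasurePreserving).restrict

/-- The `ℤ^ι`-periodization of a function; where the defining series diverges it is `0`. -/
def periodization (f : EuclideanSpace ℝ ι → E) (θ : EuclideanSpace ℝ ι) : E :=
  ∑' k, f (θ + intVec k)

variable {f : EuclideanSpace ℝ ι → E}

theorem ae_summable_add_intVec [CompleteSpace E] (hf : Integrable f) :
    ∀ᵐ θ ∂volume.restrict (unitCube ι), Summable fun k ↦ f (θ + intVec k) := by
  have hfin : ∫⁻ θ in unitCube ι, ∑' k, ‖f (θ + intVec k)‖ₑ ≠ ∞ := by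
    rw [lintegral_unitCube_tsum_add_intVec (f := fun x ↦ ‖f x‖ₑ) hf.1.enorm]
    exact hf.2.ne
  filter_upwards [ae_lt_top' (.tsum fun k ↦ (hf.comp_add_right (intVec k)).1.enorm.restrict)
    hfin] with θ hθ
  exact .of_enorm hθ.ne

theorem aestronglyMeasurable_periodization [CompleteSpace E] (hf : AEStronglyMeasurable f) :
    AEStronglyMeasurable (periodization f) (volume.restrict (unitCube ι)) :=
  .tsum fun k ↦ (hf.comp_measurePreserving (measurePreserving_add_right _ (intVec k))).restrict

theorem setIntegral_unitCube_periodization [NormedSpace ℝ E] (hf : Integrable f) :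
    ∫ θ in unitCube ι, periodization f θ = ∫ x, f x := by
  rw [integral_eq_tsum_unitCube hf]
  refine integral_tsum (fun k ↦ (hf.comp_add_right (intVec k)).1.restrict) ?_
  rw [← lintegral_eq_tsum_unitCube fun x ↦ ‖f x‖ₑ]
  exact hf.2.ne

theorem coe_fourierChar_inner (x y : EuclideanSpace ℝ ι) :
    (Real.fourierChar ⟪x, y⟫ : ℂ) = ∏ j, (Real.fourierChar (x j * y j) : ℂ) := by
  have hinner : ⟪x, y⟫ = ∑ j, x j * y j := by simp [PiLp.inner_apply, mul_comm]
  rw [hinner]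
  simp only [Real.fourierChar_apply, Finset.mul_sum, Complex.ofReal_sum, Finset.sum_mul,
    Complex.exp_sum]

/-- The `n`-th character `e^{2πi⟨x, n⟩}` of the torus `ℝ^ι/ℤ^ι`. -/
def latticeChar (n : ι → ℤ) (x : EuclideanSpace ℝ ι) : Circle := Real.fourierChar ⟪x, intVec n⟫

theorem continuous_latticeChar (n : ι → ℤ) : Continuous (latticeChar n) :=
  Real.continuous_fourierChar.comp (by fun_prop)

theorem latticeChar_add_intVec (n k : ι → ℤ) (x : EuclideanSpace ℝ ι) :
    latticeChar n (x + intVec k) = latticeChar n x := by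
  have hint : ⟪intVec k, intVec n⟫ = ((∑ j, k j * n j : ℤ) : ℝ) := by
    simp [PiLp.inner_apply, mul_comm]
  rw [latticeChar, inner_add_left, AddChar.map_add_eq_mul, hint,
    Real.fourierChar_apply' (_ : ℤ), mul_comm (2 * Real.pi), Circle.exp_int_mul_two_pi, mul_one,
    latticeChar]

/-- The `n`-th Fourier coefficient of a function given on the unit cube. -/
def cubeFourierCoeff [NormedSpace ℂ E] (A : EuclideanSpace ℝ ι → E) (n : ι → ℤ) : E :=
  ∫ θ in unitCube ι, latticeChar (-n) θ • A θ

theorem fourier_intVec_eq_cubeFourierCoeff_periodization [NormedSpace ℂ E]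
    (hf : Integrable f) (n : ι → ℤ) :
    𝓕 f (intVec n) = cubeFourierCoeff (periodization f) n := by
  have hchar (x : EuclideanSpace ℝ ι) : Real.fourierChar (-⟪x, intVec n⟫) = latticeChar (-n) x := by
    rw [latticeChar, map_neg intVec, inner_neg_right]
  have hperiod : periodization (fun x ↦ latticeChar (-n) x • f x) =
      fun θ ↦ latticeChar (-n) θ • periodization f θ := by
    funext θ
    simp only [periodization, latticeChar_add_intVec]
    exact tsum_const_smul' _
  have hint := (Real.fourierIntegral_convergent_iff (intVec n)).2 hf
  simp only [hchar] at hint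
  rw [Real.fourier_eq, cubeFourierCoeff, ← hperiod, setIntegral_unitCube_periodization hint]
  simp only [hchar]

end IntegerLattice

theorem hasSum_norm_sq_repr_compl {ι 𝕜 E : Type*} [RCLike 𝕜] [NormedAddCommGroup E]
    [InnerProductSpace 𝕜 E] (b : HilbertBasis ι 𝕜 E) (s : Finset ι) (x : E) :
    HasSum (fun i : {i // i ∉ s} ↦ ‖b.repr x i‖ ^ 2) (‖x - ∑ i ∈ s, b.repr x i • b i‖ ^ 2) := by
  set y := x - ∑ i ∈ s, b.repr x i • b i
  have hrepr_mem {i : ι} (hi : i ∈ s) : b.repr y i = 0 := by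
    rw [b.repr_apply_apply, inner_sub_right, b.orthonormal.inner_right_sum _ hi,
      b.repr_apply_apply, sub_self]
  have hrepr_notMem {i : ι} (hi : i ∉ s) : b.repr y i = b.repr x i := by
    rw [b.repr_apply_apply, inner_sub_right, inner_sum, b.repr_apply_apply,
      Finset.sum_eq_zero fun j hj ↦ ?_, sub_zero]
    rw [inner_smul_right, b.orthonormal.inner_eq_zero (ne_of_mem_of_not_mem hj hi).symm, mul_zero]
  have hnorm : HasSum (fun i ↦ ‖b.repr y i‖ ^ 2) (‖y‖ ^ 2) := by
    simpa using lp.hasSum_norm (by norm_num) (b.repr y)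
  rw [← Function.Injective.hasSum_iff (Subtype.val_injective (p := (· ∉ s)))
    fun i hi ↦ by simp [hrepr_mem (i := i) (by simpa using hi)]] at hnorm
  exact hnorm.congr_fun fun i ↦ by rw [Function.comp_apply, hrepr_notMem i.2]

section Parseval

variable {ι : Type*} [Fintype ι]

attribute [local instance] instMeasureSpaceUnitAddCircle instIsProbabilityMeasureUnitAddCircleVolume

/-- The representative in the unit cube of a point of the torus `ℝ^ι/ℤ^ι`. -/
def torusToCube (z : UnitAddTorus ι) : EuclideanSpace ℝ ι :=
  WithLp.toLp 2 (UnitAddTorus.measurableEquivPiIoc (fun _ ↦ -(1 / 2)) z).1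

theorem measurePreserving_torusToCube :
    MeasurePreserving (torusToCube (ι := ι)) volume (volume.restrict (unitCube ι)) := by
  have hcube : {x : ι → ℝ | ∀ i, x i ∈ Set.Ioc (-(1 / 2)) (-(1 / 2) + 1)} =
      WithLp.toLp 2 ⁻¹' unitCube ι := by
    norm_num [unitCube]
  have hcoe := measurePreserving_subtype_coe (μa := volume)
    (MeasurableSet.univ_pi' fun i : ι ↦ measurableSet_Ioc (a := -(1 / 2 : ℝ)) (b := -(1 / 2) + 1))
  have htoLp := (PiLp.volume_preserving_toLp ι).restrict_preimage measurableSet_unitCube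
  rw [← hcube] at htoLp
  exact htoLp.comp (hcoe.comp (UnitAddTorus.measurePreserving_equivPiIoc _))

theorem latticeChar_torusToCube (n : ι → ℤ) (z : UnitAddTorus ι) :
    (latticeChar n (torusToCube z) : ℂ) = UnitAddTorus.mFourier n z := by
  have hcoe (j : ι) : ((torusToCube z j : ℝ) : UnitAddCircle) = z j :=
    (AddCircle.equivIoc 1 (-(1 / 2))).symm_apply_apply (z j)
  rw [latticeChar, coe_fourierChar_inner]
  refine Finset.prod_congr rfl fun j _ ↦ ?_
  rw [← hcoe, fourier_coe_apply, Real.fourierChar_apply, intVec_apply]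
  push_cast
  ring_nf

variable {A : EuclideanSpace ℝ ι → ℂ}

theorem mFourierBasis_repr_toLp_torusToCube (hA : MemLp A 2 (volume.restrict (unitCube ι)))
    (n : ι → ℤ) :
    UnitAddTorus.mFourierBasis.repr
      ((hA.comp_measurePreserving measurePreserving_torusToCube).toLp _) n =
      cubeFourierCoeff A n := by
  have hmeas : AEStronglyMeasurable (fun θ ↦ latticeChar (-n) θ • A θ)
      (volume.map (torusToCube (ι := ι))) := by
    rw [measurePreserving_torusToCube.map_eq]
    exact (continuous_latticeChar _).aestronglyMeasurable.smul hA.1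
  have hpull : cubeFourierCoeff A n =
      ∫ z, latticeChar (-n) (torusToCube z) • A (torusToCube z) := by
    rw [← integral_map measurePreserving_torusToCube.aemeasurable hmeas,
      measurePreserving_torusToCube.map_eq, cubeFourierCoeff]
  rw [hpull, UnitAddTorus.mFourierBasis_repr]
  refine integral_congr_ae ?_
  filter_upwards [(hA.comp_measurePreserving measurePreserving_torusToCube).coeFn_toLp] with z hz
  rw [hz, Circle.smul_def, latticeChar_torusToCube]
  rfl

theorem lintegral_enorm_sub_sum_latticeChar_sq (hA : MemLp A 2 (volume.restrict (unitCube ι)))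
    (s : Finset (ι → ℤ)) :
    ∫⁻ θ in unitCube ι, ‖A θ - ∑ n ∈ s, cubeFourierCoeff A n * latticeChar n θ‖ₑ ^ 2 =
      ∑' n : {n // n ∉ s}, ‖cubeFourierCoeff A n‖ₑ ^ 2 := by
  set F := (hA.comp_measurePreserving measurePreserving_torusToCube).toLp _
  set p : C(UnitAddTorus ι, ℂ) := ∑ n ∈ s, cubeFourierCoeff A n • UnitAddTorus.mFourier n
  have hcoef (n : ι → ℤ) : UnitAddTorus.mFourierBasis.repr F n = cubeFourierCoeff A n :=
    mFourierBasis_repr_toLp_torusToCube hA n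
  have hp : ∑ n ∈ s, cubeFourierCoeff A n • UnitAddTorus.mFourierBasis n =
      p.toLp 2 volume ℂ := by
    simp [p, UnitAddTorus.coe_mFourierBasis]
  have hpull : (F - p.toLp 2 volume ℂ : Lp ℂ 2 (volume : Measure (UnitAddTorus ι))) =ᵐ[volume]
      (fun θ ↦ A θ - ∑ n ∈ s, cubeFourierCoeff A n * latticeChar n θ) ∘ torusToCube := by
    filter_upwards [Lp.coeFn_sub F (p.toLp 2 volume ℂ), p.coeFn_toLp (p := 2) (𝕜 := ℂ) volume,
      (hA.comp_measurePreserving measurePreserving_torusToCube).coeFn_toLp] with z hsub hpz hFz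
    rw [hsub, Pi.sub_apply, hpz, hFz]
    simp [p, latticeChar_torusToCube]
  have hmeas : AEStronglyMeasurable
      (fun θ ↦ A θ - ∑ n ∈ s, cubeFourierCoeff A n * latticeChar n θ)
      (volume.restrict (unitCube ι)) :=
    hA.1.sub (continuous_finsetSum _ fun n _ ↦ continuous_const.mul
      (continuous_subtype_val.comp (continuous_latticeChar n))).aestronglyMeasurable
  have hnorm := hasSum_norm_sq_repr_compl UnitAddTorus.mFourierBasis s F
  simp only [hcoef, hp] at hnorm
  rw [← eLpNorm_two_sq, ← eLpNorm_comp_measurePreserving hmeas measurePreserving_torusToCube,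
    ← eLpNorm_congr_ae hpull, ← Lp.enorm_def, ← ofReal_norm, ← ENNReal.ofReal_pow (norm_nonneg _),
    ← hnorm.tsum_eq, ENNReal.ofReal_tsum_of_nonneg (fun _ ↦ sq_nonneg _) hnorm.summable]
  simp [ENNReal.ofReal_pow]

end Parseval

theorem intervalIntegral_fourierChar_mul_eq_sinc (a : ℝ) :
    ∫ t in -(1 / 2)..1 / 2, (Real.fourierChar (t * a) : ℂ) = Real.sinc (Real.pi * a) := by
  rcases eq_or_ne a 0 with rfl | ha
  · norm_num
  have hscale := intervalIntegral.smul_integral_comp_mul_right (a := -(1 / 2)) (b := 1 / 2)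
    (fun t : ℝ ↦ Complex.exp (t * Complex.I)) (2 * Real.pi * a)
  rw [show -(1 / 2) * (2 * Real.pi * a) = -(Real.pi * a) by ring,
    show 1 / 2 * (2 * Real.pi * a) = Real.pi * a by ring, integral_exp_mul_I_eq_sinc,
    Complex.real_smul] at hscale
  have hne : ((2 * Real.pi * a : ℝ) : ℂ) ≠ 0 := by
    exact_mod_cast mul_ne_zero Real.two_pi_pos.ne' ha
  refine mul_left_cancel₀ hne ?_
  convert hscale using 1
  · simp only [Real.fourierChar_apply]
    congr! 6
    ring
  · push_cast
    ring

section SincKernel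

variable {ι : Type*} [Fintype ι]

theorem setIntegral_unitCube_fourierChar_inner (w : EuclideanSpace ℝ ι) :
    ∫ v in unitCube ι, (Real.fourierChar ⟪v, w⟫ : ℂ) = ∏ j, (Real.sinc (Real.pi * w j) : ℂ) := by
  simp only [coe_fourierChar_inner]
  rw [unitCube_eq_preimage_pi]
  refine ((EuclideanSpace.volume_preserving_symm_measurableEquiv_toLp ι).setIntegral_preimage_emb
    (MeasurableEquiv.measurableEmbedding _) (fun u ↦ ∏ j, (Real.fourierChar (u j * w j) : ℂ))
    _).trans ?_
  rw [volume_pi, Measure.restrict_pi_pi,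
    integral_fintype_prod_eq_prod (fun j t ↦ (Real.fourierChar (t * w j) : ℂ))]
  refine Finset.prod_congr rfl fun j _ ↦ ?_
  rw [← intervalIntegral.integral_of_le (by norm_num), intervalIntegral_fourierChar_mul_eq_sinc]

/-- The tensor-product cardinal sine centred at the lattice point `n`; in terms of it,
`f_{N,n}(x)` is `cardinalSinc n (N • x)`. -/
def cardinalSinc (n : ι → ℤ) (x : EuclideanSpace ℝ ι) : ℝ := ∏ j, Real.sinc (Real.pi * (x j - n j))

/-- The character `latticeChar n` cut off to the unit cube. -/
def cubeChar (n : ι → ℤ) : EuclideanSpace ℝ ι → ℂ :=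
  (unitCube ι).indicator fun v ↦ (latticeChar n v : ℂ)

theorem fourier_cubeChar (n : ι → ℤ) (x : EuclideanSpace ℝ ι) :
    𝓕 (cubeChar n) x = cardinalSinc n x := by
  have hmul (v : EuclideanSpace ℝ ι) :
      Real.fourierChar (-⟪v, x⟫) • cubeChar n v =
        (unitCube ι).indicator (fun v ↦ (Real.fourierChar ⟪v, intVec n - x⟫ : ℂ)) v := by
    by_cases hv : v ∈ unitCube ι
    · simp only [cubeChar, Set.indicator_of_mem hv, latticeChar, Circle.smul_def, smul_eq_mul,
        ← Circle.coe_mul, ← AddChar.map_add_eq_mul, inner_sub_right, neg_add_eq_sub]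
    · simp [cubeChar, Set.indicator_of_notMem hv]
  have hsymm (j : ι) :
      Real.sinc (Real.pi * (intVec n - x) j) = Real.sinc (Real.pi * (x j - n j)) := by
    rw [← Real.sinc_neg, PiLp.sub_apply, intVec_apply, ← mul_neg, neg_sub]
  rw [Real.fourier_eq]
  simp only [hmul]
  rw [integral_indicator measurableSet_unitCube, setIntegral_unitCube_fourierChar_inner,
    cardinalSinc]
  simp only [hsymm, Complex.ofReal_prod]

theorem memLp_cubeChar (p : ℝ≥0∞) (n : ι → ℤ) : MemLp (cubeChar n) p := by
  rw [cubeChar, memLp_indicator_iff_restrict measurableSet_unitCube]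
  exact .of_bound (continuous_subtype_val.comp (continuous_latticeChar n)).aestronglyMeasurable 1
    (ae_of_all _ fun _ ↦ (Circle.norm_coe _).le)

end SincKernel

section CauchySchwarz

variable {α : Type*}

theorem lintegral_mul_sq_le [MeasurableSpace α] {μ : Measure α} {f g : α → ℝ≥0∞}
    (hf : AEMeasurable f μ) (hg : AEMeasurable g μ) :
    (∫⁻ x, f x * g x ∂μ) ^ 2 ≤ (∫⁻ x, f x ^ 2 ∂μ) * ∫⁻ x, g x ^ 2 ∂μ := by
  have hholder := ENNReal.lintegral_mul_le_Lp_mul_Lq μ Real.HolderConjugate.two_two hf hg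
  simp only [Pi.mul_apply, ENNReal.rpow_two] at hholder
  calc (∫⁻ x, f x * g x ∂μ) ^ 2
      ≤ ((∫⁻ x, f x ^ 2 ∂μ) ^ (1 / 2 : ℝ) * (∫⁻ x, g x ^ 2 ∂μ) ^ (1 / 2 : ℝ)) ^ 2 := by gcongr
    _ = (∫⁻ x, f x ^ 2 ∂μ) * ∫⁻ x, g x ^ 2 ∂μ := by
      rw [mul_pow, ← ENNReal.rpow_mul_natCast, ← ENNReal.rpow_mul_natCast]
      norm_num

theorem tsum_mul_sq_le (f g : α → ℝ≥0∞) :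
    (∑' i, f i * g i) ^ 2 ≤ (∑' i, f i ^ 2) * ∑' i, g i ^ 2 := by
  let _ : MeasurableSpace α := ⊤
  simpa only [lintegral_count] using lintegral_mul_sq_le (μ := .count)
    (measurable_from_top (f := f)).aemeasurable (measurable_from_top (f := g)).aemeasurable

theorem enorm_tsum_mul_sq_le {R : Type*} [NormedRing R] [NormMulClass R] (f g : α → R) :
    ‖∑' i, f i * g i‖ₑ ^ 2 ≤ (∑' i, ‖f i‖ₑ ^ 2) * ∑' i, ‖g i‖ₑ ^ 2 :=
  calc ‖∑' i, f i * g i‖ₑ ^ 2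
      ≤ (∑' i, ‖f i‖ₑ * ‖g i‖ₑ) ^ 2 := by
        simp only [← enorm_mul]
        exact pow_le_pow_left' enorm_tsum_le_tsum_enorm 2
    _ ≤ (∑' i, ‖f i‖ₑ ^ 2) * ∑' i, ‖g i‖ₑ ^ 2 := tsum_mul_sq_le _ _

end CauchySchwarz

theorem enorm_sub_sq_le {E : Type*} [SeminormedAddCommGroup E] (x y z : E) :
    ‖x - z‖ₑ ^ 2 ≤ 2 * (‖y - x‖ₑ ^ 2 + ‖y - z‖ₑ ^ 2) := by
  have hconvex := ENNReal.rpow_add_le_mul_rpow_add_rpow ‖y - x‖ₑ ‖y - z‖ₑ one_le_two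
  norm_num only [ENNReal.rpow_two, ENNReal.rpow_one] at hconvex
  calc ‖x - z‖ₑ ^ 2 = ‖(y - z) - (y - x)‖ₑ ^ 2 := by congr 2; abel
    _ ≤ (‖y - x‖ₑ + ‖y - z‖ₑ) ^ 2 := by
      rw [add_comm ‖y - x‖ₑ]
      exact pow_le_pow_left' enorm_sub_le 2
    _ ≤ 2 * (‖y - x‖ₑ ^ 2 + ‖y - z‖ₑ ^ 2) := hconvex

theorem periodization_sub_self {ι E : Type*} [NormedAddCommGroup E] [CompleteSpace E]
    {f : EuclideanSpace ℝ ι → E} {θ : EuclideanSpace ℝ ι}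
    (hf : Summable fun k ↦ f (θ + intVec k)) :
    periodization f θ - f θ = ∑' k : ({0}ᶜ : Set (ι → ℤ)), f (θ + intVec k) := by
  rw [periodization, ← hf.tsum_subtype_add_tsum_subtype_compl {0},
    tsum_singleton 0 fun k ↦ f (θ + intVec k), map_zero, add_zero, add_sub_cancel_left]

theorem enorm_periodization_mul_sub_sq_le {ι R : Type*} [NormedRing R] [NormMulClass R]
    [CompleteSpace R] {g v : EuclideanSpace ℝ ι → R} {θ : EuclideanSpace ℝ ι}
    (hgv : Summable fun k ↦ g (θ + intVec k) * v (θ + intVec k)) :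
    ‖periodization (fun ξ ↦ g ξ * v ξ) θ - g θ * v θ‖ₑ ^ 2 ≤
      (∑' k : ({0}ᶜ : Set (ι → ℤ)), ‖g (θ + intVec k)‖ₑ ^ 2) *
        ∑' k : ι → ℤ, ‖v (θ + intVec k)‖ₑ ^ 2 := by
  have hsub : periodization (fun ξ ↦ g ξ * v ξ) θ - g θ * v θ =
      ∑' k : ({0}ᶜ : Set (ι → ℤ)), g (θ + intVec k) * v (θ + intVec k) :=
    periodization_sub_self (f := fun ξ ↦ g ξ * v ξ) hgv
  have hle : ∑' k : ({0}ᶜ : Set (ι → ℤ)), ‖v (θ + intVec k)‖ₑ ^ 2 ≤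
      ∑' k : ι → ℤ, ‖v (θ + intVec k)‖ₑ ^ 2 :=
    ENNReal.tsum_comp_le_tsum_of_injective Subtype.val_injective fun k ↦ ‖v (θ + intVec k)‖ₑ ^ 2
  have hcs := enorm_tsum_mul_sq_le (fun k : ({0}ᶜ : Set (ι → ℤ)) ↦ g (θ + intVec k))
    fun k ↦ v (θ + intVec k)
  exact hsub ▸ hcs.trans (mul_le_mul_right hle _)

section Sampling

variable {ι : Type*} [Fintype ι]

theorem lintegral_enorm_periodization_mul_sub_sq_le {R : Type*} [NormedRing R] [NormMulClass R]
    [CompleteSpace R] {g v : EuclideanSpace ℝ ι → R} {M : ℝ≥0∞}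
    (hv : AEStronglyMeasurable v) (hgv : Integrable fun ξ ↦ g ξ * v ξ)
    (hg : ∀ θ ∈ unitCube ι, ∑' k : ({0}ᶜ : Set (ι → ℤ)), ‖g (θ + intVec k)‖ₑ ^ 2 ≤ M) :
    ∫⁻ θ in unitCube ι, ‖periodization (fun ξ ↦ g ξ * v ξ) θ - g θ * v θ‖ₑ ^ 2 ≤
      M * ∫⁻ ξ, ‖v ξ‖ₑ ^ 2 := by
  have hv_sq : AEMeasurable fun ξ ↦ ‖v ξ‖ₑ ^ 2 := hv.enorm.pow_const 2
  have htsum : AEMeasurable (fun θ ↦ ∑' k : ι → ℤ, ‖v (θ + intVec k)‖ₑ ^ 2)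
      (volume.restrict (unitCube ι)) :=
    .tsum fun k ↦ (hv_sq.comp_quasiMeasurePreserving
      (measurePreserving_add_right _ (intVec k)).quasiMeasurePreserving).restrict
  rw [← lintegral_unitCube_tsum_add_intVec hv_sq, ← lintegral_const_mul'' _ htsum]
  refine lintegral_mono_ae ?_
  filter_upwards [ae_summable_add_intVec hgv, ae_restrict_mem measurableSet_unitCube]
    with θ hsum hθ
  exact (enorm_periodization_mul_sub_sq_le hsum).trans (mul_le_mul_left (hg θ hθ) _)

variable {b : EuclideanSpace ℝ ι → ℂ}

theorem fourier_sub_sum_cubeChar (hb : Integrable b) (s : Finset (ι → ℤ)) (c : (ι → ℤ) → ℂ)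
    (x : EuclideanSpace ℝ ι) :
    𝓕 (fun ξ ↦ b ξ - ∑ n ∈ s, c n * cubeChar n ξ) x =
      𝓕 b x - ∑ n ∈ s, c n * cardinalSinc n x := by
  have hint {f : EuclideanSpace ℝ ι → ℂ} (hf : Integrable f) :
      Integrable fun ξ ↦ Real.fourierChar (-⟪ξ, x⟫) • f ξ :=
    (Real.fourierIntegral_convergent_iff x).2 hf
  have hterm (n : ι → ℤ) :
      Integrable fun ξ ↦ Real.fourierChar (-⟪ξ, x⟫) • (c n * cubeChar n ξ) :=
    hint ((memLp_one_iff_integrable.1 (memLp_cubeChar 1 n)).const_mul _)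
  simp only [← fourier_cubeChar, Real.fourier_eq, smul_sub, Finset.smul_sum]
  rw [integral_sub (hint hb) (integrable_finsetSum s fun n _ ↦ hterm n),
    integral_finsetSum s fun n _ ↦ hterm n]
  simp only [← integral_const_mul, mul_smul_comm]

theorem memLp_fourier_sub_sum_cardinalSinc (hb : Integrable b) (hb₂ : MemLp b 2)
    (s : Finset (ι → ℤ)) (c : (ι → ℤ) → ℂ) :
    MemLp (fun x ↦ 𝓕 b x - ∑ n ∈ s, c n * cardinalSinc n x) 2 ∧
      eLpNorm (fun x ↦ 𝓕 b x - ∑ n ∈ s, c n * cardinalSinc n x) 2 =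
        eLpNorm (fun ξ ↦ b ξ - ∑ n ∈ s, c n * cubeChar n ξ) 2 := by
  have hint : Integrable fun ξ ↦ b ξ - ∑ n ∈ s, c n * cubeChar n ξ :=
    hb.sub (integrable_finsetSum s fun n _ ↦
      (memLp_one_iff_integrable.1 (memLp_cubeChar 1 n)).const_mul _)
  have hmem : MemLp (fun ξ ↦ b ξ - ∑ n ∈ s, c n * cubeChar n ξ) 2 :=
    hb₂.sub (memLp_finsetSum s fun n _ ↦ (memLp_cubeChar 2 n).const_mul _)
  simp only [← fourier_sub_sum_cubeChar hb]
  exact ⟨memLp_two_fourier hint hmem, eLpNorm_fourier_two hint hmem⟩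

theorem eLpNorm_fourier_sub_sum_cardinalSinc_sq_le (hb : Integrable b) (hb₂ : MemLp b 2)
    (hper : MemLp (periodization b) 2 (volume.restrict (unitCube ι))) (s : Finset (ι → ℤ)) :
    eLpNorm (fun x ↦ 𝓕 b x - ∑ n ∈ s, 𝓕 b (intVec n) * cardinalSinc n x) 2 ^ 2 ≤
      (∫⁻ ξ in (unitCube ι)ᶜ, ‖b ξ‖ₑ ^ 2) +
        2 * (∫⁻ θ in unitCube ι, ‖periodization b θ - b θ‖ₑ ^ 2) +
        2 * ∑' n : {n // n ∉ s}, ‖𝓕 b (intVec n)‖ₑ ^ 2 := by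
  have hout : ∫⁻ ξ in (unitCube ι)ᶜ, ‖b ξ - ∑ n ∈ s, 𝓕 b (intVec n) * cubeChar n ξ‖ₑ ^ 2 =
      ∫⁻ ξ in (unitCube ι)ᶜ, ‖b ξ‖ₑ ^ 2 :=
    setLIntegral_congr_fun measurableSet_unitCube.compl fun ξ hξ ↦ by
      simp [cubeChar, Set.indicator_of_notMem hξ]
  have hin : ∫⁻ ξ in unitCube ι, ‖b ξ - ∑ n ∈ s, 𝓕 b (intVec n) * cubeChar n ξ‖ₑ ^ 2 ≤
      2 * (∫⁻ θ in unitCube ι, ‖periodization b θ - b θ‖ₑ ^ 2) +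
        2 * ∑' n : {n // n ∉ s}, ‖𝓕 b (intVec n)‖ₑ ^ 2 := by
    have halias : AEMeasurable (fun θ ↦ ‖periodization b θ - b θ‖ₑ ^ 2)
        (volume.restrict (unitCube ι)) := (hper.1.sub hb.1.restrict).enorm.pow_const 2
    simp only [fourier_intVec_eq_cubeFourierCoeff_periodization hb]
    rw [← lintegral_enorm_sub_sum_latticeChar_sq hper s, ← mul_add, ← lintegral_add_left' halias,
      ← lintegral_const_mul' _ _ (by norm_num)]
    refine setLIntegral_mono' measurableSet_unitCube fun ξ hξ ↦ ?_
    simp only [cubeChar, Set.indicator_of_mem hξ]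
    exact enorm_sub_sq_le _ _ _
  rw [(memLp_fourier_sub_sum_cardinalSinc hb hb₂ s _).2, eLpNorm_two_sq,
    ← lintegral_add_compl _ measurableSet_unitCube, hout, add_comm, add_assoc]
  gcongr

end Sampling

/-- A bound for the lattice Gaussian sums `∑ₙ exp (-σ |n - y|²)` over `n ∈ ℤ^d`, uniform in `y`. -/
def latticeGaussianBound (d : ℕ) (σ : ℝ) : ℝ :=
  Real.exp d * (2 * Real.pi) ^ ((d : ℝ) / 2) * (1 + σ ^ (-(d : ℝ) / 2))

theorem one_le_latticeGaussianBound (d : ℕ) {σ : ℝ} (hσ : 0 < σ) :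
    1 ≤ latticeGaussianBound d σ := by
  have hexp : 1 ≤ Real.exp d := Real.one_le_exp d.cast_nonneg
  have hpi : 1 ≤ (2 * Real.pi) ^ ((d : ℝ) / 2) :=
    Real.one_le_rpow (by linarith [Real.pi_gt_three]) (by positivity)
  have hσd : 1 ≤ 1 + σ ^ (-(d : ℝ) / 2) := le_add_of_nonneg_right (by positivity)
  exact one_le_mul_of_one_le_of_one_le (one_le_mul_of_one_le_of_one_le hexp hpi) hσd

theorem latticeGaussianBound_anti (d : ℕ) {σ σ' : ℝ} (hσ : 0 < σ) (hσσ' : σ ≤ σ') :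
    latticeGaussianBound d σ' ≤ latticeGaussianBound d σ := by
  have hrpow := Real.rpow_le_rpow_of_nonpos (z := -(d : ℝ) / 2) hσ hσσ'
    (div_nonpos_of_nonpos_of_nonneg (neg_nonpos.2 d.cast_nonneg) zero_le_two)
  unfold latticeGaussianBound
  gcongr

theorem exp_neg_mul_norm_sq_le {V : Type*} [SeminormedAddCommGroup V] {σ : ℝ} (hσ : 0 ≤ σ)
    (x w : V) :
    Real.exp (-(σ * ‖w‖ ^ 2)) ≤ Real.exp (σ * ‖x‖ ^ 2) * Real.exp (-(σ / 2 * ‖x + w‖ ^ 2)) := by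
  have hsq : ‖x + w‖ ^ 2 ≤ 2 * (‖x‖ ^ 2 + ‖w‖ ^ 2) :=
    (pow_le_pow_left₀ (norm_nonneg _) (norm_add_le x w) 2).trans add_sq_le
  rw [← Real.exp_add, Real.exp_le_exp]
  linarith [mul_le_mul_of_nonneg_left hsq hσ]

section LatticeGaussian

variable {ι : Type*} [Fintype ι]

theorem ofReal_exp_neg_mul_norm_intVec_sub_sq_le {σ : ℝ} (hσ : 0 ≤ σ) (hσ₁ : σ ≤ 1)
    (n : ι → ℤ) (y : EuclideanSpace ℝ ι) :
    ENNReal.ofReal (Real.exp (-(σ * ‖intVec n - y‖ ^ 2))) ≤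
      ∫⁻ x in unitCube ι, ENNReal.ofReal
        (Real.exp (Fintype.card ι) * Real.exp (-(σ / 2 * ‖x + intVec n - y‖ ^ 2))) := by
  calc ENNReal.ofReal (Real.exp (-(σ * ‖intVec n - y‖ ^ 2)))
      = ∫⁻ _ in unitCube ι, ENNReal.ofReal (Real.exp (-(σ * ‖intVec n - y‖ ^ 2))) := by
        rw [setLIntegral_const, volume_unitCube, mul_one]
    _ ≤ _ := by
        refine setLIntegral_mono' measurableSet_unitCube fun x hx ↦ ENNReal.ofReal_le_ofReal ?_
        rw [add_sub_assoc]
        refine (exp_neg_mul_norm_sq_le hσ x _).trans ?_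
        gcongr
        exact (mul_le_of_le_one_left (sq_nonneg _) hσ₁).trans (norm_sq_le_card_of_mem_unitCube hx)

theorem tsum_exp_neg_mul_norm_intVec_sub_sq_le_of_le_one {σ : ℝ} (hσ : 0 < σ) (hσ₁ : σ ≤ 1)
    (y : EuclideanSpace ℝ ι) :
    ∑' n : ι → ℤ, ENNReal.ofReal (Real.exp (-(σ * ‖intVec n - y‖ ^ 2))) ≤
      ENNReal.ofReal (Real.exp (Fintype.card ι) *
        ((2 * Real.pi) ^ ((Fintype.card ι : ℝ) / 2) * σ ^ (-(Fintype.card ι : ℝ) / 2))) := by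
  have hgauss : ∫ x : EuclideanSpace ℝ ι, Real.exp (-(σ / 2 * ‖x‖ ^ 2)) =
      (2 * Real.pi) ^ ((Fintype.card ι : ℝ) / 2) * σ ^ (-(Fintype.card ι : ℝ) / 2) := by
    simp only [← neg_mul]
    rw [GaussianFourier.integral_rexp_neg_mul_sq_norm (half_pos hσ), finrank_euclideanSpace,
      show Real.pi / (σ / 2) = 2 * Real.pi * σ⁻¹ by field_simp,
      Real.mul_rpow (by positivity) (by positivity), Real.inv_rpow hσ.le, ← Real.rpow_neg hσ.le,
      neg_div]
  let G : EuclideanSpace ℝ ι → ℝ≥0∞ := fun x ↦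
    ENNReal.ofReal (Real.exp (Fintype.card ι) * Real.exp (-(σ / 2 * ‖x‖ ^ 2)))
  calc ∑' n : ι → ℤ, ENNReal.ofReal (Real.exp (-(σ * ‖intVec n - y‖ ^ 2)))
      ≤ ∑' n : ι → ℤ, ∫⁻ x in unitCube ι, G (x + intVec n - y) :=
        ENNReal.tsum_le_tsum fun n ↦ ofReal_exp_neg_mul_norm_intVec_sub_sq_le hσ.le hσ₁ n y
    _ = ∫⁻ x, G x := by
        rw [← lintegral_eq_tsum_unitCube fun x ↦ G (x - y), lintegral_sub_right_eq_self]
    _ = ENNReal.ofReal (Real.exp (Fintype.card ι) *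
          ((2 * Real.pi) ^ ((Fintype.card ι : ℝ) / 2) * σ ^ (-(Fintype.card ι : ℝ) / 2))) := by
        rw [← ofReal_integral_eq_lintegral_ofReal
          ((integrable_exp_neg_mul_sq_norm (half_pos hσ)).const_mul _)
          (.of_forall fun x ↦ by positivity), integral_const_mul, hgauss]

theorem tsum_exp_neg_mul_norm_intVec_sub_sq_le {σ : ℝ} (hσ : 0 < σ) (y : EuclideanSpace ℝ ι) :
    ∑' n : ι → ℤ, ENNReal.ofReal (Real.exp (-(σ * ‖intVec n - y‖ ^ 2))) ≤
      ENNReal.ofReal (latticeGaussianBound (Fintype.card ι) σ) := by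
  unfold latticeGaussianBound
  rcases le_total σ 1 with hσ₁ | hσ₁
  · refine (tsum_exp_neg_mul_norm_intVec_sub_sq_le_of_le_one hσ hσ₁ y).trans ?_
    rw [← mul_assoc]
    gcongr
    exact le_add_of_nonneg_left zero_le_one
  · calc ∑' n : ι → ℤ, ENNReal.ofReal (Real.exp (-(σ * ‖intVec n - y‖ ^ 2)))
        ≤ ∑' n : ι → ℤ, ENNReal.ofReal (Real.exp (-(1 * ‖intVec n - y‖ ^ 2))) := by gcongr
      _ ≤ _ := tsum_exp_neg_mul_norm_intVec_sub_sq_le_of_le_one one_pos le_rfl y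
      _ ≤ _ := by
        rw [Real.one_rpow, ← mul_assoc]
        gcongr
        exact le_add_of_nonneg_right (by positivity)

theorem heatSymbol_le_exp_of_notMem_unitCube {τ : ℝ} (hτ : 0 ≤ τ) {ξ : EuclideanSpace ℝ ι}
    (hξ : ξ ∉ unitCube ι) : heatSymbol τ ξ ≤ Real.exp (-(2 * τ)) := by
  have hpi : 2 * 4 ≤ 4 * Real.pi ^ 2 := by nlinarith [Real.pi_gt_three]
  rw [heatSymbol, Real.exp_le_exp, neg_le_neg_iff]
  calc 2 * τ = 2 * 4 * τ * (1 / 4) := by ring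
    _ ≤ 4 * Real.pi ^ 2 * τ * ‖ξ‖ ^ 2 := by
      gcongr
      exact one_div_four_le_norm_sq_of_notMem_unitCube hξ

theorem enorm_heatSymbol_sq_le_of_notMem_unitCube {τ : ℝ} (hτ : 0 ≤ τ) {ξ : EuclideanSpace ℝ ι}
    (hξ : ξ ∉ unitCube ι) :
    ‖(heatSymbol τ ξ : ℂ)‖ₑ ^ 2 ≤
      ENNReal.ofReal (Real.exp (-(2 * τ))) * ENNReal.ofReal (heatSymbol τ ξ) := by
  have hpos := (heatSymbol_pos τ ξ).le
  rw [← ofReal_norm, Complex.norm_of_nonneg hpos, sq]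
  gcongr
  exact heatSymbol_le_exp_of_notMem_unitCube hτ hξ

theorem tsum_enorm_heatSymbol_add_intVec_sq_le {τ : ℝ} (hτ : 0 < τ) {θ : EuclideanSpace ℝ ι}
    (hθ : θ ∈ unitCube ι) :
    ∑' k : ({0}ᶜ : Set (ι → ℤ)), ‖(heatSymbol τ (θ + intVec k) : ℂ)‖ₑ ^ 2 ≤
      ENNReal.ofReal (Real.exp (-(2 * τ)) * latticeGaussianBound (Fintype.card ι) τ) := by
  have hpi : τ ≤ 4 * Real.pi ^ 2 * τ :=
    le_mul_of_one_le_left hτ.le (by nlinarith [Real.pi_gt_three])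
  have hle : ∑' k : ({0}ᶜ : Set (ι → ℤ)), ENNReal.ofReal (heatSymbol τ (θ + intVec k)) ≤
      ∑' k : ι → ℤ, ENNReal.ofReal (heatSymbol τ (θ + intVec k)) :=
    ENNReal.tsum_comp_le_tsum_of_injective Subtype.val_injective
      fun k ↦ ENNReal.ofReal (heatSymbol τ (θ + intVec k))
  have hpointwise (k : ({0}ᶜ : Set (ι → ℤ))) :
      ‖(heatSymbol τ (θ + intVec k) : ℂ)‖ₑ ^ 2 ≤
        ENNReal.ofReal (Real.exp (-(2 * τ))) * ENNReal.ofReal (heatSymbol τ (θ + intVec k)) :=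
    enorm_heatSymbol_sq_le_of_notMem_unitCube hτ.le (add_intVec_notMem_unitCube hθ k.2)
  have hsum := ENNReal.tsum_le_tsum hpointwise
  rw [ENNReal.tsum_mul_left] at hsum
  refine (hsum.trans (mul_le_mul_right hle _)).trans ?_
  calc ENNReal.ofReal (Real.exp (-(2 * τ))) *
        ∑' k : ι → ℤ, ENNReal.ofReal (heatSymbol τ (θ + intVec k))
      ≤ ENNReal.ofReal (Real.exp (-(2 * τ))) *
          ENNReal.ofReal (latticeGaussianBound (Fintype.card ι) (4 * Real.pi ^ 2 * τ)) := by
        gcongr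
        simpa only [heatSymbol, sub_neg_eq_add, add_comm] using
          tsum_exp_neg_mul_norm_intVec_sub_sq_le (σ := 4 * Real.pi ^ 2 * τ) (by positivity) (-θ)
    _ ≤ _ := by
        rw [← ENNReal.ofReal_mul (Real.exp_nonneg _)]
        gcongr
        exact latticeGaussianBound_anti _ hτ hpi

theorem lintegral_compl_unitCube_enorm_heatSymbol_mul_sq_le {τ : ℝ} (hτ : 0 ≤ τ)
    (v : EuclideanSpace ℝ ι → ℂ) :
    ∫⁻ ξ in (unitCube ι)ᶜ, ‖(heatSymbol τ ξ : ℂ) * v ξ‖ₑ ^ 2 ≤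
      ENNReal.ofReal (Real.exp (-(2 * τ))) * ∫⁻ ξ, ‖v ξ‖ₑ ^ 2 := by
  rw [← lintegral_const_mul' _ _ ENNReal.ofReal_ne_top]
  refine (setLIntegral_mono' measurableSet_unitCube.compl fun ξ hξ ↦ ?_).trans
    (setLIntegral_le_lintegral _ _)
  rw [enorm_mul, mul_pow]
  gcongr
  refine (enorm_heatSymbol_sq_le_of_notMem_unitCube hτ hξ).trans (mul_le_of_le_one_right' ?_)
  exact ENNReal.ofReal_le_one.2 (heatSymbol_le_one hτ ξ)

end LatticeGaussian

section HeatFlow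

variable {V : Type*} [NormedAddCommGroup V] [InnerProductSpace ℝ V]

theorem heatKernel_pos {τ : ℝ} (hτ : 0 < τ) (x : V) : 0 < heatKernel τ x :=
  mul_pos (by positivity) (Real.exp_pos _)

theorem continuous_heatKernel (τ : ℝ) : Continuous (heatKernel τ : V → ℝ) := by
  unfold heatKernel
  fun_prop

/-- If `‖x‖ ≥ ρ`, then either `y` or `x - y` is large; a large `x - y` is paid for by half of the
Gaussian. -/
theorem heatKernel_sub_le {τ ρ : ℝ} (hτ : 0 < τ) (hρ : 0 < ρ) {x : V} (hx : ρ ≤ ‖x‖) (y : V) :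
    heatKernel τ (x - y) ≤ 16 / ρ ^ 2 * (4 * Real.pi * τ) ^ (-(Module.finrank ℝ V : ℝ) / 2) *
      ((‖y‖ ^ 2 + τ) * Real.exp (-(1 / (8 * τ) * ‖x - y‖ ^ 2))) := by
  set t := 1 / (8 * τ) * ‖x - y‖ ^ 2 with ht
  have hnorm : ‖x - y‖ ^ 2 = 8 * τ * t := by rw [ht]; field_simp
  have hsplit : Real.exp (-‖x - y‖ ^ 2 / (4 * τ)) = Real.exp (-t) * Real.exp (-t) := by
    rw [← Real.exp_add, hnorm]
    congr 1; field_simp; ring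
  have hρ_sq : ρ ^ 2 ≤ 2 * (8 * τ * t + ‖y‖ ^ 2) := by
    rw [← hnorm]
    calc ρ ^ 2 ≤ (‖x - y‖ + ‖y‖) ^ 2 := by
          gcongr
          exact hx.trans (norm_le_norm_sub_add x y)
      _ ≤ 2 * (‖x - y‖ ^ 2 + ‖y‖ ^ 2) := add_sq_le
  have ht_exp : t * Real.exp (-t) ≤ 1 := by
    rw [Real.exp_neg, ← div_eq_mul_inv, div_le_one (Real.exp_pos t)]
    linarith [Real.add_one_le_exp t]
  have hexp : Real.exp (-t) ≤ 1 := Real.exp_le_one_iff.2 (neg_nonpos.2 (by positivity))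
  have hweight : Real.exp (-t) ≤ 16 / ρ ^ 2 * (‖y‖ ^ 2 + τ) := by
    rw [div_mul_eq_mul_div, le_div_iff₀' (by positivity)]
    calc ρ ^ 2 * Real.exp (-t) ≤ 2 * (8 * τ * t + ‖y‖ ^ 2) * Real.exp (-t) := by gcongr
      _ = 16 * τ * (t * Real.exp (-t)) + 2 * ‖y‖ ^ 2 * Real.exp (-t) := by ring
      _ ≤ 16 * τ * 1 + 2 * ‖y‖ ^ 2 * 1 := by gcongr
      _ ≤ 16 * (‖y‖ ^ 2 + τ) := by linarith [sq_nonneg ‖y‖]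
  calc heatKernel τ (x - y)
      = (4 * Real.pi * τ) ^ (-(Module.finrank ℝ V : ℝ) / 2) *
          (Real.exp (-t) * Real.exp (-t)) := by rw [heatKernel, hsplit]
    _ ≤ (4 * Real.pi * τ) ^ (-(Module.finrank ℝ V : ℝ) / 2) *
          (16 / ρ ^ 2 * (‖y‖ ^ 2 + τ) * Real.exp (-t)) := by gcongr
    _ = _ := by ring

variable [FiniteDimensional ℝ V] [MeasurableSpace V] [BorelSpace V]

theorem lintegral_heatKernel_sub {τ : ℝ} (hτ : 0 < τ) (x : V) :
    ∫⁻ y, ENNReal.ofReal (heatKernel τ (x - y)) = 1 := by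
  have hkernel (y : V) : heatKernel τ y =
      (4 * Real.pi * τ) ^ (-(Module.finrank ℝ V : ℝ) / 2) *
        Real.exp (-((1 / (4 * τ)) * ‖y‖ ^ 2)) := by
    rw [heatKernel]; congr 2; ring
  have hint : Integrable (heatKernel τ : V → ℝ) := by
    simp only [funext hkernel]
    exact (integrable_exp_neg_mul_sq_norm (by positivity)).const_mul _
  have hgauss : ∫ y : V, heatKernel τ y = 1 := by
    simp only [hkernel, ← neg_mul]
    rw [integral_const_mul, GaussianFourier.integral_rexp_neg_mul_sq_norm (by positivity),
      show Real.pi / (1 / (4 * τ)) = 4 * Real.pi * τ by field_simp,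
      ← Real.rpow_add (by positivity), neg_div, neg_add_cancel, Real.rpow_zero]
  rw [lintegral_sub_left_eq_self fun y ↦ ENNReal.ofReal (heatKernel τ y),
    ← ofReal_integral_eq_lintegral_ofReal hint (.of_forall fun y ↦ (heatKernel_pos hτ y).le),
    hgauss, ENNReal.ofReal_one]

theorem enorm_heatFlow_sq_le {τ : ℝ} (hτ : 0 < τ) {u : V → ℂ} (hu : AEStronglyMeasurable u)
    (x : V) :
    ‖heatFlow τ u x‖ₑ ^ 2 ≤ ∫⁻ y, ENNReal.ofReal (heatKernel τ (x - y)) * ‖u y‖ₑ ^ 2 := by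
  let h : V → ℝ≥0∞ := fun y ↦ ENNReal.ofReal √(heatKernel τ (x - y))
  have hh_sq (y : V) : h y ^ 2 = ENNReal.ofReal (heatKernel τ (x - y)) := by
    rw [← ENNReal.ofReal_pow (Real.sqrt_nonneg _), Real.sq_sqrt (heatKernel_pos hτ _).le]
  have hh : AEMeasurable h := by
    have := continuous_heatKernel (V := V) τ
    fun_prop
  calc ‖heatFlow τ u x‖ₑ ^ 2
      ≤ (∫⁻ y, h y * (h y * ‖u y‖ₑ)) ^ 2 := by
        gcongr
        refine (enorm_integral_le_lintegral_enorm _).trans_eq (lintegral_congr fun y ↦ ?_)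
        rw [enorm_mul, ← ofReal_norm (heatKernel τ (x - y) : ℂ),
          Complex.norm_of_nonneg (heatKernel_pos hτ _).le, ← hh_sq, sq, mul_assoc]
    _ ≤ (∫⁻ y, h y ^ 2) * ∫⁻ y, (h y * ‖u y‖ₑ) ^ 2 := lintegral_mul_sq_le hh (hh.mul hu.enorm)
    _ = ∫⁻ y, ENNReal.ofReal (heatKernel τ (x - y)) * ‖u y‖ₑ ^ 2 := by
        simp only [mul_pow, hh_sq, lintegral_heatKernel_sub hτ x, one_mul]

end HeatFlow

theorem rpow_mul_latticeGaussianBound_le (d : ℕ) {τ : ℝ} (hτ : 0 < τ) :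
    (4 * Real.pi * τ) ^ (-(d : ℝ) / 2) * latticeGaussianBound d (1 / (8 * τ)) ≤
      latticeGaussianBound d τ := by
  have hd : -(d : ℝ) / 2 ≤ 0 :=
    div_nonpos_of_nonpos_of_nonneg (neg_nonpos.2 d.cast_nonneg) zero_le_two
  have hone : (4 * Real.pi * τ) ^ (-(d : ℝ) / 2) ≤ τ ^ (-(d : ℝ) / 2) :=
    Real.rpow_le_rpow_of_nonpos hτ
      (le_mul_of_one_le_left hτ.le (by linarith [Real.pi_gt_three])) hd
  have hscale : (4 * Real.pi * τ) ^ (-(d : ℝ) / 2) * (1 / (8 * τ)) ^ (-(d : ℝ) / 2) ≤ 1 := by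
    rw [← Real.mul_rpow (by positivity) (by positivity)]
    refine Real.rpow_le_one_of_one_le_of_nonpos ?_ hd
    rw [show 4 * Real.pi * τ * (1 / (8 * τ)) = Real.pi / 2 by field_simp; norm_num]
    linarith [Real.pi_gt_three]
  unfold latticeGaussianBound
  rw [mul_left_comm]
  gcongr
  linarith

section UnitLattice

variable {ι : Type*} [Fintype ι] {u : EuclideanSpace ℝ ι → ℂ} {τ ρ : ℝ}

theorem enorm_heatFlow_sq_le_of_le_norm (hu : AEStronglyMeasurable u) (hτ : 0 < τ) (hρ : 0 < ρ)
    {x : EuclideanSpace ℝ ι} (hx : ρ ≤ ‖x‖) :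
    ‖heatFlow τ u x‖ₑ ^ 2 ≤
      ENNReal.ofReal (16 / ρ ^ 2 * (4 * Real.pi * τ) ^ (-(Fintype.card ι : ℝ) / 2)) *
        ∫⁻ y, ENNReal.ofReal (Real.exp (-(1 / (8 * τ) * ‖x - y‖ ^ 2))) *
          (ENNReal.ofReal (‖y‖ ^ 2 + τ) * ‖u y‖ₑ ^ 2) := by
  refine (enorm_heatFlow_sq_le hτ hu x).trans ?_
  rw [← lintegral_const_mul' _ _ ENNReal.ofReal_ne_top]
  refine lintegral_mono fun y ↦ ?_
  rw [← mul_assoc, ← mul_assoc, ← ENNReal.ofReal_mul (by positivity),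
    ← ENNReal.ofReal_mul (by positivity)]
  gcongr
  have hkernel := heatKernel_sub_le hτ hρ hx y
  rw [finrank_euclideanSpace] at hkernel
  linarith

theorem tsum_lintegral_exp_neg_mul_norm_intVec_sub_sq_le {σ : ℝ} (hσ : 0 < σ)
    {w : EuclideanSpace ℝ ι → ℝ≥0∞} (hw : AEMeasurable w) :
    ∑' n : ι → ℤ, ∫⁻ y, ENNReal.ofReal (Real.exp (-(σ * ‖intVec n - y‖ ^ 2))) * w y ≤
      ENNReal.ofReal (latticeGaussianBound (Fintype.card ι) σ) * ∫⁻ y, w y := by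
  have hmeas (n : ι → ℤ) : AEMeasurable fun y : EuclideanSpace ℝ ι ↦
      ENNReal.ofReal (Real.exp (-(σ * ‖intVec n - y‖ ^ 2))) * w y :=
    AEMeasurable.mul (by fun_prop) hw
  rw [← lintegral_tsum hmeas, ← lintegral_const_mul' _ _ ENNReal.ofReal_ne_top]
  gcongr with y
  rw [ENNReal.tsum_mul_right]
  gcongr
  exact tsum_exp_neg_mul_norm_intVec_sub_sq_le hσ y

theorem tsum_enorm_heatFlow_intVec_sq_le (hu : AEStronglyMeasurable u) (hτ : 0 < τ) (hρ : 0 < ρ)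
    {p : (ι → ℤ) → Prop} (hp : ∀ n, p n → ρ ≤ ‖intVec n‖) :
    ∑' n : {n // p n}, ‖heatFlow τ u (intVec n)‖ₑ ^ 2 ≤
      ENNReal.ofReal (16 * latticeGaussianBound (Fintype.card ι) τ) *
        ∫⁻ y, ENNReal.ofReal ((‖y‖ ^ 2 + τ) / ρ ^ 2) * ‖u y‖ₑ ^ 2 := by
  set c := 16 / ρ ^ 2 * (4 * Real.pi * τ) ^ (-(Fintype.card ι : ℝ) / 2) with hc
  set σ := 1 / (8 * τ)
  let w : EuclideanSpace ℝ ι → ℝ≥0∞ := fun y ↦ ENNReal.ofReal (‖y‖ ^ 2 + τ) * ‖u y‖ₑ ^ 2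
  have hw : AEMeasurable w := AEMeasurable.mul (by fun_prop) (hu.enorm.pow_const 2)
  have hbound : c * latticeGaussianBound (Fintype.card ι) σ ≤
      16 * latticeGaussianBound (Fintype.card ι) τ * (1 / ρ ^ 2) := by
    calc _ = 16 / ρ ^ 2 * ((4 * Real.pi * τ) ^ (-(Fintype.card ι : ℝ) / 2) *
          latticeGaussianBound (Fintype.card ι) σ) := by rw [hc, mul_assoc]
      _ ≤ 16 / ρ ^ 2 * latticeGaussianBound (Fintype.card ι) τ := by
          gcongr
          exact rpow_mul_latticeGaussianBound_le _ hτ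
      _ = _ := by ring
  calc ∑' n : {n // p n}, ‖heatFlow τ u (intVec n)‖ₑ ^ 2
      ≤ ∑' n : {n // p n}, ENNReal.ofReal c *
          ∫⁻ y, ENNReal.ofReal (Real.exp (-(σ * ‖intVec (n : ι → ℤ) - y‖ ^ 2))) * w y :=
        ENNReal.tsum_le_tsum fun n ↦ enorm_heatFlow_sq_le_of_le_norm hu hτ hρ (hp n n.2)
    _ ≤ ENNReal.ofReal c * ∑' n : ι → ℤ,
          ∫⁻ y, ENNReal.ofReal (Real.exp (-(σ * ‖intVec n - y‖ ^ 2))) * w y := by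
        rw [ENNReal.tsum_mul_left]
        gcongr
        exact ENNReal.tsum_comp_le_tsum_of_injective Subtype.val_injective _
    _ ≤ ENNReal.ofReal c *
          (ENNReal.ofReal (latticeGaussianBound (Fintype.card ι) σ) * ∫⁻ y, w y) := by
        gcongr
        exact tsum_lintegral_exp_neg_mul_norm_intVec_sub_sq_le (by positivity) hw
    _ ≤ ENNReal.ofReal (16 * latticeGaussianBound (Fintype.card ι) τ * (1 / ρ ^ 2)) *
          ∫⁻ y, w y := by
        rw [← mul_assoc, ← ENNReal.ofReal_mul (by positivity)]
        gcongr
    _ = _ := by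
        rw [ENNReal.ofReal_mul' (by positivity), mul_assoc,
          ← lintegral_const_mul' _ _ ENNReal.ofReal_ne_top]
        congr! 3 with y
        rw [← mul_assoc, ← ENNReal.ofReal_mul (by positivity), one_div_mul_eq_div]

theorem lintegral_enorm_periodization_heatSymbol_mul_sub_sq_le {v : EuclideanSpace ℝ ι → ℂ}
    (hv : MemLp v 2) (hτ : 0 < τ) :
    ∫⁻ θ in unitCube ι, ‖periodization (fun ξ ↦ (heatSymbol τ ξ : ℂ) * v ξ) θ -
        (heatSymbol τ θ : ℂ) * v θ‖ₑ ^ 2 ≤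
      ENNReal.ofReal (Real.exp (-(2 * τ)) * latticeGaussianBound (Fintype.card ι) τ) *
        ∫⁻ ξ, ‖v ξ‖ₑ ^ 2 :=
  lintegral_enorm_periodization_mul_sub_sq_le hv.1 (integrable_heatSymbol_mul hτ hv)
    fun _ ↦ tsum_enorm_heatSymbol_add_intVec_sq_le hτ

theorem memLp_two_periodization_heatSymbol_mul {v : EuclideanSpace ℝ ι → ℂ}
    (hv : MemLp v 2) (hτ : 0 < τ) :
    MemLp (periodization fun ξ ↦ (heatSymbol τ ξ : ℂ) * v ξ) 2 (volume.restrict (unitCube ι)) := by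
  set b : EuclideanSpace ℝ ι → ℂ := fun ξ ↦ (heatSymbol τ ξ : ℂ) * v ξ
  have hb : MemLp b 2 (volume.restrict (unitCube ι)) :=
    (memLp_two_heatSymbol_mul hτ.le hv).restrict _
  have hfinite : ∫⁻ ξ, ‖v ξ‖ₑ ^ 2 < ∞ := by
    rw [← eLpNorm_two_sq]
    exact ENNReal.pow_lt_top hv.2
  have hsub : MemLp (fun θ ↦ periodization b θ - b θ) 2 (volume.restrict (unitCube ι)) := by
    refine ⟨(aestronglyMeasurable_periodization
      (integrable_heatSymbol_mul hτ hv).1).sub hb.1,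
      (ENNReal.pow_lt_top_iff.1 ?_).resolve_right two_ne_zero⟩
    rw [eLpNorm_two_sq]
    exact (lintegral_enorm_periodization_heatSymbol_mul_sub_sq_le hv hτ).trans_lt
      (ENNReal.mul_lt_top ENNReal.ofReal_lt_top hfinite)
  refine (hsub.add hb).ae_eq (.of_forall fun θ ↦ ?_)
  simp

/-- The error made in replacing the solution at time `T` by the cardinal series built from its
samples at the points `n / N`, `n ∈ s`. -/
def samplingError (T N : ℝ) (s : Finset (ι → ℤ)) (u : EuclideanSpace ℝ ι → ℂ)
    (x : EuclideanSpace ℝ ι) : ℂ :=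
  heatFlow T u x - ∑ n ∈ s, heatFlow T u (N⁻¹ • intVec n) * cardinalSinc n (N • x)

theorem samplingError_one (τ : ℝ) (s : Finset (ι → ℤ)) (u : EuclideanSpace ℝ ι → ℂ) :
    samplingError τ 1 s u = fun x ↦
      heatFlow τ u x - ∑ n ∈ s, heatFlow τ u (intVec n) * cardinalSinc n x := by
  funext x
  simp only [samplingError, inv_one, one_smul]

theorem memLp_samplingError_one (hu : MemLp u 2) (hτ : 0 < τ) (s : Finset (ι → ℤ)) :
    MemLp (samplingError τ 1 s u) 2 := by
  obtain ⟨v, hv, -, hfourier⟩ := exists_fourier_heatSymbol_mul_eq_heatFlow hu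
  simp only [samplingError_one, ← hfourier τ hτ]
  exact (memLp_fourier_sub_sum_cardinalSinc (integrable_heatSymbol_mul hτ hv)
    (memLp_two_heatSymbol_mul hτ.le hv) s _).1

theorem eLpNorm_samplingError_one_sq_le_add_tsum (hu : MemLp u 2) (hτ : 0 < τ)
    (s : Finset (ι → ℤ)) :
    eLpNorm (samplingError τ 1 s u) 2 ^ 2 ≤
      ENNReal.ofReal (3 * latticeGaussianBound (Fintype.card ι) τ * Real.exp (-(2 * τ))) *
          (∫⁻ y, ‖u y‖ₑ ^ 2) +
        2 * ∑' n : {n // n ∉ s}, ‖heatFlow τ u (intVec n)‖ₑ ^ 2 := by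
  set B := latticeGaussianBound (Fintype.card ι) τ
  have hB : 1 ≤ B := one_le_latticeGaussianBound _ hτ
  obtain ⟨v, hv, hvu, hfourier⟩ := exists_fourier_heatSymbol_mul_eq_heatFlow hu
  have hplancherel : ∫⁻ ξ, ‖v ξ‖ₑ ^ 2 = ∫⁻ y, ‖u y‖ₑ ^ 2 := by
    rw [← eLpNorm_two_sq, hvu, eLpNorm_two_sq]
  have hhigh := lintegral_compl_unitCube_enorm_heatSymbol_mul_sq_le hτ.le v
  have halias := lintegral_enorm_periodization_heatSymbol_mul_sub_sq_le hv hτ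
  have hsplit := eLpNorm_fourier_sub_sum_cardinalSinc_sq_le (integrable_heatSymbol_mul hτ hv)
    (memLp_two_heatSymbol_mul hτ.le hv) (memLp_two_periodization_heatSymbol_mul hv hτ) s
  simp only [hfourier τ hτ] at hsplit
  rw [← samplingError_one] at hsplit
  rw [hplancherel] at hhigh halias
  have hsum : ENNReal.ofReal (Real.exp (-(2 * τ))) +
      2 * ENNReal.ofReal (Real.exp (-(2 * τ)) * B) ≤
        ENNReal.ofReal (3 * B * Real.exp (-(2 * τ))) := by
    rw [← ENNReal.ofReal_ofNat 2, ← ENNReal.ofReal_mul (by positivity),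
      ← ENNReal.ofReal_add (by positivity) (by positivity)]
    gcongr
    nlinarith [Real.exp_pos (-(2 * τ))]
  refine hsplit.trans (add_le_add_left (le_trans ?_ (mul_le_mul_left hsum _)) _)
  rw [add_mul, mul_assoc]
  gcongr

theorem eLpNorm_samplingError_one_sq_le (hu : MemLp u 2) (hτ : 0 < τ) (hρ : 0 < ρ)
    {s : Finset (ι → ℤ)} (hs : ∀ n ∉ s, ρ ≤ ‖intVec n‖) :
    eLpNorm (samplingError τ 1 s u) 2 ^ 2 ≤
      ENNReal.ofReal (32 * latticeGaussianBound (Fintype.card ι) τ) *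
        ∫⁻ y, ENNReal.ofReal (Real.exp (-(2 * τ)) + (‖y‖ ^ 2 + τ) / ρ ^ 2) * ‖u y‖ₑ ^ 2 := by
  set B := latticeGaussianBound (Fintype.card ι) τ
  have hB : 1 ≤ B := one_le_latticeGaussianBound _ hτ
  set W := ∫⁻ y, ENNReal.ofReal ((‖y‖ ^ 2 + τ) / ρ ^ 2) * ‖u y‖ₑ ^ 2
  have htail : 2 * ∑' n : {n // n ∉ s}, ‖heatFlow τ u (intVec n)‖ₑ ^ 2 ≤
      ENNReal.ofReal (32 * B) * W := by
    calc _ ≤ 2 * (ENNReal.ofReal (16 * B) * W) :=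
          mul_le_mul_right (tsum_enorm_heatFlow_intVec_sq_le hu.1 hτ hρ hs) 2
      _ = _ := by
          rw [← ENNReal.ofReal_ofNat 2, ← mul_assoc, ← ENNReal.ofReal_mul zero_le_two, ← mul_assoc]
          norm_num
  calc _ ≤ ENNReal.ofReal (3 * B * Real.exp (-(2 * τ))) * (∫⁻ y, ‖u y‖ₑ ^ 2) +
          ENNReal.ofReal (32 * B) * W :=
        (eLpNorm_samplingError_one_sq_le_add_tsum hu hτ s).trans (add_le_add_right htail _)
    _ ≤ ENNReal.ofReal (32 * B) *
          (ENNReal.ofReal (Real.exp (-(2 * τ))) * (∫⁻ y, ‖u y‖ₑ ^ 2) + W) := by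
        rw [mul_add, ← mul_assoc, ← ENNReal.ofReal_mul (by positivity)]
        gcongr
        norm_num
    _ = _ := by
        rw [← lintegral_const_mul' _ _ ENNReal.ofReal_ne_top,
          ← lintegral_add_left' ((hu.1.enorm.pow_const 2).const_mul _)]
        congr! 3 with y
        rw [ENNReal.ofReal_add (by positivity) (by positivity), add_mul]

end UnitLattice

section Scaling

variable {V : Type*} [NormedAddCommGroup V] [InnerProductSpace ℝ V] [FiniteDimensional ℝ V]
  [MeasurableSpace V] [BorelSpace V] {N : ℝ}

theorem lintegral_comp_smul_of_pos (hN : 0 < N) (f : V → ℝ≥0∞) :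
    ∫⁻ x, f (N • x) = ENNReal.ofReal ((N ^ Module.finrank ℝ V)⁻¹) * ∫⁻ x, f x := by
  calc ∫⁻ x, f (N • x) = ∫⁻ x, f x ∂(volume : Measure V).map (N • ·) :=
        ((Homeomorph.smulOfNeZero N hN.ne').measurableEmbedding.lintegral_map f).symm
    _ = _ := by
        rw [Measure.map_addHaar_smul _ hN.ne', lintegral_smul_measure, abs_of_pos (by positivity),
          smul_eq_mul]

theorem memLp_comp_smul (hN : N ≠ 0) {E : Type*} [NormedAddCommGroup E] {f : V → E} {p : ℝ≥0∞}
    (hf : MemLp f p) : MemLp (fun x ↦ f (N • x)) p := by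
  refine MemLp.comp_of_map ?_ (by fun_prop)
  rw [Measure.map_addHaar_smul _ hN]
  exact hf.smul_measure ENNReal.ofReal_ne_top

theorem heatFlow_comp_inv_smul (hN : 0 < N) {τ : ℝ} (hτ : 0 < τ) (u : V → ℂ) (x : V) :
    heatFlow (τ * N ^ 2) (fun y ↦ u (N⁻¹ • y)) (N • x) = heatFlow τ u x := by
  have hnorm (y : V) : ‖N • x - y‖ = N * ‖x - N⁻¹ • y‖ := by
    rw [← Real.norm_of_nonneg hN.le, ← norm_smul, Real.norm_of_nonneg hN.le, smul_sub,
      smul_inv_smul₀ hN.ne']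
  have hpow : (4 * Real.pi * (τ * N ^ 2)) ^ (-(Module.finrank ℝ V : ℝ) / 2) =
      (N ^ Module.finrank ℝ V)⁻¹ * (4 * Real.pi * τ) ^ (-(Module.finrank ℝ V : ℝ) / 2) := by
    rw [← mul_assoc, Real.mul_rpow (by positivity) (by positivity), ← Real.rpow_natCast N 2,
      ← Real.rpow_mul hN.le, mul_comm, ← Real.rpow_natCast N, ← Real.rpow_neg hN.le]
    congr 2
    push_cast; ring
  have hkernel (y : V) : heatKernel (τ * N ^ 2) (N • x - y) =
      (N ^ Module.finrank ℝ V)⁻¹ * heatKernel τ (x - N⁻¹ • y) := by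
    rw [heatKernel, heatKernel, hpow, hnorm, mul_assoc]
    congr 3
    field_simp
  simp only [heatFlow, hkernel, Complex.ofReal_mul, mul_assoc]
  rw [integral_const_mul,
    Measure.integral_comp_inv_smul volume (fun y ↦ (heatKernel τ (x - y) : ℂ) * u y) N,
    abs_of_pos (by positivity), Complex.real_smul, ← mul_assoc, ← Complex.ofReal_mul,
    inv_mul_cancel₀ (by positivity), Complex.ofReal_one, one_mul]

end Scaling

section ScaledLattice

variable {ι : Type*} [Fintype ι] {u : EuclideanSpace ℝ ι → ℂ} {T N r : ℝ}

theorem samplingError_eq_comp_smul (hT : 0 < T) (hN : 0 < N) (s : Finset (ι → ℤ))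
    (x : EuclideanSpace ℝ ι) :
    samplingError T N s u x =
      samplingError (T * N ^ 2) 1 s (fun y ↦ u (N⁻¹ • y)) (N • x) := by
  simp only [samplingError, ← heatFlow_comp_inv_smul hN hT u, smul_inv_smul₀ hN.ne', inv_one,
    one_smul]

theorem memLp_samplingError (hu : MemLp u 2) (hT : 0 < T) (hN : 0 < N) (s : Finset (ι → ℤ)) :
    MemLp (samplingError T N s u) 2 := by
  rw [funext (samplingError_eq_comp_smul hT hN s)]
  exact memLp_comp_smul hN.ne' (memLp_samplingError_one
    (memLp_comp_smul (inv_ne_zero hN.ne') hu) (mul_pos hT (pow_pos hN 2)) s)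

theorem eLpNorm_samplingError_sq_le (hu : MemLp u 2) (hT : 0 < T) (hN : 0 < N) (hr : 0 < r)
    {s : Finset (ι → ℤ)} (hs : ∀ n ∉ s, r ≤ ‖N⁻¹ • intVec n‖) :
    eLpNorm (samplingError T N s u) 2 ^ 2 ≤
      ENNReal.ofReal (32 * latticeGaussianBound (Fintype.card ι) (T * N ^ 2)) *
        ∫⁻ y, ENNReal.ofReal (Real.exp (-(2 * (T * N ^ 2))) + (‖y‖ ^ 2 + T) / r ^ 2) *
          ‖u y‖ₑ ^ 2 := by
  have hs_scaled (n) (hn : n ∉ s) : r * N ≤ ‖intVec n‖ := by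
    have := hs n hn
    rwa [norm_smul, norm_inv, Real.norm_of_nonneg hN.le, inv_mul_eq_div, le_div_iff₀ hN] at this
  have hunit := eLpNorm_samplingError_one_sq_le
    (memLp_comp_smul (inv_ne_zero hN.ne') hu) (mul_pos hT (pow_pos hN 2)) (mul_pos hr hN) hs_scaled
  have hweight (y : EuclideanSpace ℝ ι) :
      (‖y‖ ^ 2 + T * N ^ 2) / (r * N) ^ 2 = (‖N⁻¹ • y‖ ^ 2 + T) / r ^ 2 := by
    rw [norm_smul, norm_inv, Real.norm_of_nonneg hN.le]
    field_simp
  simp only [hweight] at hunit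
  rw [lintegral_comp_smul_of_pos (inv_pos.2 hN) fun y ↦
    ENNReal.ofReal (Real.exp (-(2 * (T * N ^ 2))) + (‖y‖ ^ 2 + T) / r ^ 2) * ‖u y‖ₑ ^ 2] at hunit
  rw [eLpNorm_two_sq]
  simp only [samplingError_eq_comp_smul hT hN s]
  rw [lintegral_comp_smul_of_pos hN fun x ↦
    ‖samplingError (T * N ^ 2) 1 s (fun y ↦ u (N⁻¹ • y)) x‖ₑ ^ 2, ← eLpNorm_two_sq]
  have hjacobian : ENNReal.ofReal (N ^ Module.finrank ℝ (EuclideanSpace ℝ ι))⁻¹ *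
      ENNReal.ofReal (N⁻¹ ^ Module.finrank ℝ (EuclideanSpace ℝ ι))⁻¹ = 1 := by
    rw [← ENNReal.ofReal_mul (by positivity), inv_pow, inv_inv, inv_mul_cancel₀ (by positivity),
      ENNReal.ofReal_one]
  calc _ ≤ _ := mul_le_mul_right hunit _
    _ = _ := by rw [mul_left_comm, ← mul_assoc (ENNReal.ofReal _⁻¹), hjacobian, one_mul]

end ScaledLattice

theorem latticeGaussianBound_le_sq (d : ℕ) {σ : ℝ} (hσ : 0 < σ) :
    latticeGaussianBound d σ ≤ Real.exp d * (2 * Real.pi) ^ ((d : ℝ) / 2) *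
      (1 + σ ^ (-(d : ℝ) / 4)) ^ 2 := by
  have hsq : σ ^ (-(d : ℝ) / 2) = (σ ^ (-(d : ℝ) / 4)) ^ 2 := by
    rw [← Real.rpow_natCast, ← Real.rpow_mul hσ.le]
    congr 1; push_cast; ring
  rw [latticeGaussianBound, hsq]
  gcongr
  nlinarith [Real.rpow_pos_of_pos hσ (-(d : ℝ) / 4)]

theorem exp_neg_two_mul_add_div_sq_le (τ : ℝ) {T r z : ℝ} (hT : 0 ≤ T) (hr : 0 ≤ r) (hz : 0 ≤ z) :
    Real.exp (-(2 * τ)) + (z ^ 2 + T) / r ^ 2 ≤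
      (Real.exp (-τ) + √(1 + T) * r⁻¹) ^ 2 * (1 + z) ^ 2 := by
  have hz_sq : z ^ 2 + T ≤ (1 + T) * (1 + z) ^ 2 := by
    nlinarith [mul_nonneg hT hz, mul_nonneg hT (sq_nonneg z)]
  have hone : 1 ≤ (1 + z) ^ 2 := one_le_pow₀ (by linarith)
  have hcross : 0 ≤ 2 * Real.exp (-τ) * (√(1 + T) * r⁻¹) * (1 + z) ^ 2 := by positivity
  calc Real.exp (-(2 * τ)) + (z ^ 2 + T) / r ^ 2
      ≤ Real.exp (-τ) ^ 2 * (1 + z) ^ 2 + (1 + T) * (1 + z) ^ 2 / r ^ 2 := by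
        gcongr
        rw [← Real.exp_nat_mul, Nat.cast_ofNat, mul_neg]
        exact le_mul_of_one_le_right (Real.exp_pos _).le hone
    _ = (Real.exp (-τ) ^ 2 + (√(1 + T) * r⁻¹) ^ 2) * (1 + z) ^ 2 := by
        rw [mul_pow, Real.sq_sqrt (by linarith), inv_pow]; ring
    _ ≤ _ := by linarith

theorem sqrt_one_add_le {d : ℕ} (hd : 0 < d) {T : ℝ} (hT : 0 < T) :
    √(1 + T) ≤ (1 + T ^ ((d : ℝ) / 2)) * (1 + T ^ (-(1 : ℝ) / 2)) := by
  have hd_half : (1 / 2 : ℝ) ≤ d / 2 := by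
    have : (1 : ℝ) ≤ d := mod_cast hd
    linarith
  have hsqrt : √(1 + T) ≤ 1 + T ^ (1 / 2 : ℝ) := by
    rw [← Real.sqrt_eq_rpow, Real.sqrt_le_left (by positivity), add_sq, Real.sq_sqrt hT.le]
    linarith [Real.sqrt_nonneg T]
  rcases le_total T 1 with hT₁ | hT₁
  · have hhalf : T ^ (1 / 2 : ℝ) ≤ 1 := Real.rpow_le_one hT.le hT₁ (by norm_num)
    have hneg : 1 ≤ T ^ (-(1 : ℝ) / 2) :=
      Real.one_le_rpow_of_pos_of_le_one_of_nonpos hT hT₁ (by norm_num)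
    calc √(1 + T) ≤ 1 * (1 + 1) := by linarith
      _ ≤ _ := by
        gcongr
        exact le_add_of_nonneg_right (by positivity)
  · calc √(1 + T) ≤ (1 + T ^ ((d : ℝ) / 2)) * 1 := by
          rw [mul_one]
          exact hsqrt.trans (add_le_add_right (Real.rpow_le_rpow_of_exponent_le hT₁ hd_half) 1)
      _ ≤ _ := by
        gcongr
        exact le_add_of_nonneg_right (by positivity)

theorem lintegral_weight_mul_enorm_sq {V : Type*} [NormedAddCommGroup V] [MeasurableSpace V]
    {E : Type*} [NormedAddCommGroup E] {μ : Measure V} {u : V → E}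
    (hu : Integrable (fun x ↦ (1 + ‖x‖) ^ 2 * ‖u x‖ ^ 2) μ) :
    ∫⁻ x, ENNReal.ofReal ((1 + ‖x‖) ^ 2) * ‖u x‖ₑ ^ 2 ∂μ =
      ENNReal.ofReal (∫ x, (1 + ‖x‖) ^ 2 * ‖u x‖ ^ 2 ∂μ) := by
  rw [ofReal_integral_eq_lintegral_ofReal hu (.of_forall fun x ↦ by positivity)]
  refine lintegral_congr fun x ↦ ?_
  rw [ENNReal.ofReal_mul (by positivity), ENNReal.ofReal_pow (norm_nonneg _) (p := ‖u x‖),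
    ofReal_norm]

section Observability

variable {ι : Type*} [Fintype ι] {u : EuclideanSpace ℝ ι → ℂ} {T N r : ℝ}

theorem toReal_eLpNorm_samplingError_le (hu : MemLp u 2)
    (hu_weight : Integrable fun x ↦ (1 + ‖x‖) ^ 2 * ‖u x‖ ^ 2) (hT : 0 < T) (hN : 0 < N)
    (hr : 0 < r) {s : Finset (ι → ℤ)} (hs : ∀ n ∉ s, r ≤ ‖N⁻¹ • intVec n‖) :
    (eLpNorm (samplingError T N s u) 2).toReal ≤
      √(32 * (Real.exp (Fintype.card ι) * (2 * Real.pi) ^ ((Fintype.card ι : ℝ) / 2))) *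
        (1 + (T * N ^ 2) ^ (-(Fintype.card ι : ℝ) / 4)) *
        (Real.exp (-(T * N ^ 2)) + √(1 + T) * r⁻¹) * √(∫ x, (1 + ‖x‖) ^ 2 * ‖u x‖ ^ 2) := by
  set τ := T * N ^ 2
  set D := Real.exp (Fintype.card ι) * (2 * Real.pi) ^ ((Fintype.card ι : ℝ) / 2)
  set P := 1 + τ ^ (-(Fintype.card ι : ℝ) / 4)
  set E := Real.exp (-τ) + √(1 + T) * r⁻¹
  have hτ : 0 < τ := by positivity
  have hI : 0 ≤ ∫ x, (1 + ‖x‖) ^ 2 * ‖u x‖ ^ 2 := integral_nonneg fun x ↦ by positivity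
  have hsq : eLpNorm (samplingError T N s u) 2 ^ 2 ≤
      ENNReal.ofReal (32 * (D * P ^ 2) * (E ^ 2 * ∫ x, (1 + ‖x‖) ^ 2 * ‖u x‖ ^ 2)) := by
    rw [ENNReal.ofReal_mul (by positivity), ENNReal.ofReal_mul (sq_nonneg E),
      ← lintegral_weight_mul_enorm_sq hu_weight, ← lintegral_const_mul' _ _ ENNReal.ofReal_ne_top]
    refine (eLpNorm_samplingError_sq_le hu hT hN hr hs).trans ?_
    refine mul_le_mul' ?_ (lintegral_mono fun y ↦ ?_)
    · gcongr
      exact latticeGaussianBound_le_sq _ hτ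
    · rw [← mul_assoc (ENNReal.ofReal _), ← ENNReal.ofReal_mul (sq_nonneg E)]
      gcongr
      exact exp_neg_two_mul_add_div_sq_le τ hT.le hr.le (norm_nonneg y)
  refine le_of_sq_le_sq ?_ (by positivity)
  rw [← ENNReal.toReal_pow]
  refine (ENNReal.toReal_le_of_le_ofReal (by positivity) hsq).trans_eq ?_
  rw [mul_pow, mul_pow, mul_pow, Real.sq_sqrt hI, Real.sq_sqrt (by positivity)]
  ring

end Observability

section RealData

variable {d : ℕ} {u₀ : EuclideanSpace ℝ (Fin d) → ℝ}

theorem ofReal_heatSol (t : ℝ) (x : EuclideanSpace ℝ (Fin d)) :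
    (heatSol d u₀ t x : ℂ) = heatFlow t (fun y ↦ (u₀ y : ℂ)) x := by
  rw [heatSol, ← integral_const_mul, ← integral_complex_ofReal]
  simp only [heatFlow, heatKernel, finrank_euclideanSpace_fin, Complex.ofReal_mul, mul_assoc]

theorem latticePt_eq_inv_smul_intVec (N : ℝ) (n : Fin d → ℤ) :
    latticePt d N n = N⁻¹ • intVec n := by
  ext j
  simp only [latticePt, PiLp.smul_apply, intVec_apply, smul_eq_mul, div_eq_inv_mul]

theorem fN_eq_cardinalSinc (N : ℝ) (n : Fin d → ℤ) (x : EuclideanSpace ℝ (Fin d)) :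
    fN d N n x = cardinalSinc n (N • x) := rfl

theorem samplingError_ofReal (T N : ℝ) (s : Finset (Fin d → ℤ)) (x : EuclideanSpace ℝ (Fin d)) :
    samplingError T N s (fun y ↦ (u₀ y : ℂ)) x =
      ((heatSol d u₀ T x - ∑ n ∈ s, heatSol d u₀ T (latticePt d N n) * fN d N n x : ℝ) : ℂ) := by
  simp only [samplingError, Complex.ofReal_sub, Complex.ofReal_sum, Complex.ofReal_mul,
    ofReal_heatSol, latticePt_eq_inv_smul_intVec, fN_eq_cardinalSinc]

end RealData

theorem statement14_general (d : ℕ) :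
    ∃ C : ℝ, 0 < C ∧
      ∀ u₀ : EuclideanSpace ℝ (Fin d) → ℝ, MemLp u₀ 2 volume →
        Integrable (fun x => (1 + ‖x‖) ^ 2 * (u₀ x) ^ 2) volume →
      ∀ T N r : ℝ, 0 < T → 0 < N → 0 < r →
      ∀ s : Finset (Fin d → ℤ), (∀ n ∉ s, r ≤ ‖latticePt d N n‖) →
        ∃ R : EuclideanSpace ℝ (Fin d) → ℝ, MemLp R 2 volume ∧
          l2norm d R ≤
            C * (1 + (T * N ^ 2) ^ (-(d : ℝ) / 4)) *
              (Real.exp (-(T * N ^ 2)) + √(1 + T) * r⁻¹) *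
              √(∫ x, (1 + ‖x‖) ^ 2 * (u₀ x) ^ 2) ∧
          ∀ x, heatSol d u₀ T x =
            (∑ n ∈ s, heatSol d u₀ T (latticePt d N n) * fN d N n x) + R x := by
  refine ⟨√(32 * (Real.exp d * (2 * Real.pi) ^ ((d : ℝ) / 2))), by positivity,
    fun u₀ hu hu_weight T N r hT hN hr s hs ↦ ?_⟩
  set R : EuclideanSpace ℝ (Fin d) → ℝ := fun x ↦
    heatSol d u₀ T x - ∑ n ∈ s, heatSol d u₀ T (latticePt d N n) * fN d N n x
  have hR : (fun x ↦ (R x : ℂ)) = samplingError T N s fun y ↦ (u₀ y : ℂ) :=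
    funext fun x ↦ (samplingError_ofReal T N s x).symm
  have hu_complex : MemLp (fun y ↦ (u₀ y : ℂ)) 2 := hu.ofReal
  have hnorm_sq (x) : ‖(u₀ x : ℂ)‖ ^ 2 = u₀ x ^ 2 := by
    rw [Complex.norm_real, Real.norm_eq_abs, sq_abs]
  have hbound := toReal_eLpNorm_samplingError_le hu_complex (by simpa only [hnorm_sq]) hT hN hr
    (by simpa only [← latticePt_eq_inv_smul_intVec])
  simp only [hnorm_sq, Fintype.card_fin, ← hR] at hbound
  refine ⟨R, ?_, ?_, fun x ↦ (add_sub_cancel _ _).symm⟩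
  · have hR_complex : MemLp (fun x ↦ (R x : ℂ)) 2 := hR ▸ memLp_samplingError hu_complex hT hN s
    exact hR_complex.re
  · rwa [l2norm, ← eLpNorm_congr_norm_ae (.of_forall fun x ↦ Complex.norm_real (R x))]

/-- Weak asymptotic observability identity: there is `C = C(d) > 0` such that for every
`u₀ ∈ L²(ℝ^d)` with `∫ (1+|x|)² |u₀(x)|² dx < ∞`, every `T > 0`, `N > 0`, `r ≥ 1`
(where `s` is the finite set of `n ∈ ℤ^d` with `|n/N| < r`), there is `R ∈ L²(ℝ^d)` with
`‖R‖ ≤ C (1 + (TN²)^{-d/4}) (e^{-TN²} + (1+T^{d/2})(1+T^{-1/2}) r^{-1}) (∫ (1+|x|)²|u₀|²)^{1/2}`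
and `u(T,·) = Σ_{|n/N| < r} u(T,n/N) f_{N,n} + R` in `L²(ℝ^d)`. -/
theorem statement14 (d : ℕ) (hd : 0 < d) :
    ∃ C : ℝ, 0 < C ∧
      ∀ u₀ : EuclideanSpace ℝ (Fin d) → ℝ, MemLp u₀ 2 volume →
        Integrable (fun x => (1 + ‖x‖) ^ 2 * (u₀ x) ^ 2) volume →
      ∀ T N r : ℝ, 0 < T → 0 < N → 1 ≤ r →
      ∀ s : Finset (Fin d → ℤ), (∀ n : Fin d → ℤ, n ∈ s ↔ ‖latticePt d N n‖ < r) →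
        ∃ R : EuclideanSpace ℝ (Fin d) → ℝ, MemLp R 2 volume ∧
          l2norm d R ≤
            C * (1 + (T * N ^ 2) ^ (-(d : ℝ) / 4)) *
              (Real.exp (-(T * N ^ 2)) +
                (1 + T ^ ((d : ℝ) / 2)) * (1 + T ^ (-(1 : ℝ) / 2)) * r⁻¹) *
              Real.sqrt (∫ x, (1 + ‖x‖) ^ 2 * (u₀ x) ^ 2) ∧
          ∀ᵐ x ∂(volume : Measure (EuclideanSpace ℝ (Fin d))),
            heatSol d u₀ T x =
              (∑ n ∈ s, heatSol d u₀ T (latticePt d N n) * fN d N n x) + R x := by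
  obtain ⟨C, hC, hgeneral⟩ := statement14_general d
  refine ⟨C, hC, fun u₀ hu hu_weight T N r hT hN hr s hs ↦ ?_⟩
  obtain ⟨R, hR, hbound, hsum⟩ := hgeneral u₀ hu hu_weight T N r hT hN (by linarith) s
    fun n hn ↦ not_lt.1 (mt (hs n).2 hn)
  refine ⟨R, hR, hbound.trans ?_, .of_forall hsum⟩
  gcongr
  exact sqrt_one_add_le hd hT
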